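/- arXiv:math/0406574 — 2 statements merged into one kernel-verified Lean document; each statement's English description precedes it below -/
import Mathlib

section
/- (Pieri rule for B_n, stated at the level of Weyl alternants.) Let n ≥ 1, let γ be a dominant weight of type B_n, and let r ∈ ℕ. In the Laurent polynomial ring ℤ[y_1^{±1},…,y_n^{±1}], where for β ∈ (ℤ/2)^n we write x^β = Π_{i=1}^n y_i^{2β_i} and a^{B_n}_β = Σ_{σ∈W_{B_n}} det(σ)·x^{σ(β)}, the following identity holds: a^{B_n}_{γ+ρ_{B_n}} · ( Σ x^{(k̄_n − k_n, …, k̄_1 − k_1)} ) = Σ_λ b^λ_{γ,r} · a^{B_n}_{λ+ρ_{B_n}}, where the sum on the left is over all tuples (k_1,…,k_n,k̄_1,…,k̄_n) ∈ ℕ^{2n} and k_0 ∈ {0,1} with k_0 + Σ_{i=1}^n (k_i + k̄_i) = r, and the sum on the right is over all dominant weights λ of type B_n with λ − γ ∈ ℤ^n (only finitely many terms are nonzero). (The left factor is the character of the irreducible so_{2n+1}-module V(rΛ_{n−1}), so b^λ_{γ,r} is the multiplicity of V(λ) in V(γ) ⊗ V(rΛ_{n−1}).) -/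
open scoped BigOperators

noncomputable section

/-- The `q`-analogue of Kostant's partition function attached to the finite set `R`
of positive roots: the coefficient of `q^k` is the number of families
`(m_α)_{α ∈ R}` of nonnegative integers with `∑ m_α = k` and `∑ m_α • α = β`. -/
def kostantQ {n : ℕ} (R : Finset (Fin n → ℚ)) (β : Fin n → ℚ) : PowerSeries ℤ :=
  PowerSeries.mk fun k =>
    (Nat.card {m : {α // α ∈ R} → ℕ //
      (∑ α, m α) = k ∧ (∑ α, (m α : ℚ) • (α : Fin n → ℚ)) = β} : ℤ)

/-- Positive roots of type `D_n` : `e_i - e_j` and `e_i + e_j` for `j < i`. -/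
def rootsD (n : ℕ) : Finset (Fin n → ℚ) :=
  ((Finset.univ : Finset (Fin n × Fin n)).filter fun p => p.2 < p.1).image
      (fun p => Pi.single p.1 (1 : ℚ) - Pi.single p.2 1) ∪
  ((Finset.univ : Finset (Fin n × Fin n)).filter fun p => p.2 < p.1).image
      (fun p => Pi.single p.1 (1 : ℚ) + Pi.single p.2 1)

/-- Positive roots of type `B_n`. -/
def rootsB (n : ℕ) : Finset (Fin n → ℚ) :=
  rootsD n ∪ (Finset.univ : Finset (Fin n)).image fun i => Pi.single i (1 : ℚ)

/-- Positive roots of type `C_n`. -/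
def rootsC (n : ℕ) : Finset (Fin n → ℚ) :=
  rootsD n ∪ (Finset.univ : Finset (Fin n)).image fun i => Pi.single i (2 : ℚ)

/-- Positive roots of type `A_{n-1}` : `e_i - e_j` for `j < i`. -/
def rootsA (n : ℕ) : Finset (Fin n → ℚ) :=
  ((Finset.univ : Finset (Fin n × Fin n)).filter fun p => p.2 < p.1).image
      fun p => Pi.single p.1 (1 : ℚ) - Pi.single p.2 1

/-- `ρ` of type `B_n` : `e_i`-coordinate `i - 1/2` (`0`-based index `i ↦ i + 1/2`). -/
def rhoB (n : ℕ) : Fin n → ℚ := fun i => ((i : ℕ) : ℚ) + 1/2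

/-- `ρ` of type `C_n` : `e_i`-coordinate `i`. -/
def rhoC (n : ℕ) : Fin n → ℚ := fun i => ((i : ℕ) : ℚ) + 1

/-- `ρ` of type `D_n` : `e_i`-coordinate `i - 1`. -/
def rhoD (n : ℕ) : Fin n → ℚ := fun i => ((i : ℕ) : ℚ)

/-- `ρ` of type `A_{n-1}` : `e_i`-coordinate `i - 1`. -/
def rhoA (n : ℕ) : Fin n → ℚ := fun i => ((i : ℕ) : ℚ)

/-- The signed permutation `(σ, ε)` acting on a weight: it maps `e_j` to `± e_{σ j}`. -/
def wAct {n : ℕ} (σ : Equiv.Perm (Fin n)) (ε : Fin n → Bool) (β : Fin n → ℚ) :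
    Fin n → ℚ := fun i => (if ε i then -1 else 1) * β (σ⁻¹ i)

/-- The determinant (sign) of the signed permutation `(σ, ε)`. -/
def wDet {n : ℕ} (σ : Equiv.Perm (Fin n)) (ε : Fin n → Bool) : ℤ :=
  (Equiv.Perm.sign σ : ℤ) * ∏ i, (if ε i then (-1 : ℤ) else 1)

/-- Kostka-Foulkes polynomial of type `B_n`, as a power series in `q`. -/
def KB (n : ℕ) (lam mu : Fin n → ℚ) : PowerSeries ℤ :=
  ∑ σ : Equiv.Perm (Fin n), ∑ ε : Fin n → Bool,
    wDet σ ε • kostantQ (rootsB n) (wAct σ ε (lam + rhoB n) - (mu + rhoB n))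

/-- Kostka-Foulkes polynomial of type `C_n`, as a power series in `q`. -/
def KC (n : ℕ) (lam mu : Fin n → ℚ) : PowerSeries ℤ :=
  ∑ σ : Equiv.Perm (Fin n), ∑ ε : Fin n → Bool,
    wDet σ ε • kostantQ (rootsC n) (wAct σ ε (lam + rhoC n) - (mu + rhoC n))

/-- Kostka-Foulkes polynomial of type `D_n`, as a power series in `q` (the Weyl group
consists of the signed permutations with an even number of sign changes). -/
def KD (n : ℕ) (lam mu : Fin n → ℚ) : PowerSeries ℤ :=
  ∑ σ : Equiv.Perm (Fin n), ∑ ε : Fin n → Bool,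
    if (∏ i, (if ε i then (-1 : ℤ) else 1)) = 1 then
      wDet σ ε • kostantQ (rootsD n) (wAct σ ε (lam + rhoD n) - (mu + rhoD n))
    else 0

/-- Kostka-Foulkes polynomial of type `A_{n-1}`, as a power series in `q`. -/
def KA (n : ℕ) (lam mu : Fin n → ℚ) : PowerSeries ℤ :=
  ∑ σ : Equiv.Perm (Fin n),
    (Equiv.Perm.sign σ : ℤ) •
      kostantQ (rootsA n) ((fun i => (lam + rhoA n) (σ⁻¹ i)) - (mu + rhoA n))

/-- Dominant weight of type `B_n` : `λ_n ≥ ⋯ ≥ λ_1 ≥ 0`, all coordinates in `ℤ`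
or all in `ℤ + 1/2`. -/
def DominantB {n : ℕ} (lam : Fin n → ℚ) : Prop :=
  Monotone lam ∧ (∀ i, 0 ≤ lam i) ∧
    ((∀ i, ∃ z : ℤ, lam i = z) ∨ (∀ i, ∃ z : ℤ, lam i = z + 1/2))

/-- Dominant weight of type `C_n` : `λ_n ≥ ⋯ ≥ λ_1 ≥ 0`, integer coordinates. -/
def DominantC {n : ℕ} (lam : Fin n → ℚ) : Prop :=
  Monotone lam ∧ (∀ i, 0 ≤ lam i) ∧ ∀ i, ∃ z : ℤ, lam i = z

/-- Dominant weight of type `D_n` : `λ_n ≥ ⋯ ≥ λ_2 ≥ |λ_1|`, all coordinates in `ℤ`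
or all in `ℤ + 1/2`. -/
def DominantD {n : ℕ} (lam : Fin n → ℚ) : Prop :=
  (∀ i j : Fin n, i ≤ j → 0 < (i : ℕ) → lam i ≤ lam j) ∧
  (∀ h : 0 < n, ∀ j : Fin n, 0 < (j : ℕ) → |lam ⟨0, h⟩| ≤ lam j) ∧
  ((∀ i, ∃ z : ℤ, lam i = z) ∨ (∀ i, ∃ z : ℤ, lam i = z + 1/2))

/-- Restriction of a weight of rank `n` to the first `n - 1` coordinates
(i.e. forgetting the `e_n`-coordinate). -/
def restrict1 {n : ℕ} (lam : Fin n → ℚ) : Fin (n - 1) → ℚ :=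
  fun i => lam ⟨(i : ℕ), by have := i.2; omega⟩

/-- Pieri number `b^λ_{γ,r}` of type `B_n`. -/
def bPieri {m : ℕ} (γ lam : Fin m → ℚ) (r : ℕ) : ℕ :=
  Nat.card {t : (Fin m → ℕ) × (Fin m → ℕ) × Bool //
    ((cond t.2.2 1 0) + ∑ i, (t.1 i + t.2.1 i)) = r ∧
    (∀ i, ((t.2.1 i : ℚ) - (t.1 i : ℚ)) = lam i - γ i) ∧
    (∀ i : Fin m, ∀ h : (i : ℕ) + 1 < m,
      lam i ≤ lam ⟨(i : ℕ) + 1, h⟩ - (t.2.1 ⟨(i : ℕ) + 1, h⟩ : ℚ)) ∧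
    (∀ i : Fin m, ∀ h : (i : ℕ) + 1 < m,
      lam i + (t.1 i : ℚ) - (t.2.1 i : ℚ) ≤
        lam ⟨(i : ℕ) + 1, h⟩ - (t.2.1 ⟨(i : ℕ) + 1, h⟩ : ℚ)) ∧
    (∀ h : 0 < m,
      if t.2.2 then (0 : ℚ) < lam ⟨0, h⟩ - (t.2.1 ⟨0, h⟩ : ℚ)
      else (0 : ℚ) ≤ lam ⟨0, h⟩ - (t.2.1 ⟨0, h⟩ : ℚ))}

/-- Pieri number `c^λ_{γ,r}` of type `C_n`. -/
def cPieri {m : ℕ} (γ lam : Fin m → ℚ) (r : ℕ) : ℕ :=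
  Nat.card {t : (Fin m → ℕ) × (Fin m → ℕ) //
    (∑ i, (t.1 i + t.2 i)) = r ∧
    (∀ i, ((t.2 i : ℚ) - (t.1 i : ℚ)) = lam i - γ i) ∧
    (∀ i : Fin m, ∀ h : (i : ℕ) + 1 < m,
      lam i ≤ lam ⟨(i : ℕ) + 1, h⟩ - (t.2 ⟨(i : ℕ) + 1, h⟩ : ℚ)) ∧
    (∀ i : Fin m, ∀ h : (i : ℕ) + 1 < m,
      lam i + (t.1 i : ℚ) - (t.2 i : ℚ) ≤
        lam ⟨(i : ℕ) + 1, h⟩ - (t.2 ⟨(i : ℕ) + 1, h⟩ : ℚ)) ∧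
    (∀ h : 0 < m, (0 : ℚ) ≤ lam ⟨0, h⟩ - (t.2 ⟨0, h⟩ : ℚ))}

/-- Pieri number `d^λ_{γ,r}` of type `D_n`. -/
def dPieri {m : ℕ} (γ lam : Fin m → ℚ) (r : ℕ) : ℕ :=
  Nat.card {t : (Fin m → ℕ) × (Fin m → ℕ) //
    (∀ h : 0 < m, min (t.1 ⟨0, h⟩) (t.2 ⟨0, h⟩) = 0) ∧
    (∑ i, (t.1 i + t.2 i)) = r ∧
    (∀ i, ((t.2 i : ℚ) - (t.1 i : ℚ)) = lam i - γ i) ∧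
    (∀ h : 1 < m,
      (t.1 ⟨0, by omega⟩ = 0 →
        lam ⟨0, by omega⟩ ≤ lam ⟨1, h⟩ - (t.2 ⟨1, h⟩ : ℚ)) ∧
      (0 < t.1 ⟨0, by omega⟩ →
        -lam ⟨0, by omega⟩ ≤ lam ⟨1, h⟩ - (t.2 ⟨1, h⟩ : ℚ))) ∧
    (∀ i : Fin m, 1 ≤ (i : ℕ) → ∀ h : (i : ℕ) + 1 < m,
      lam i ≤ lam ⟨(i : ℕ) + 1, h⟩ - (t.2 ⟨(i : ℕ) + 1, h⟩ : ℚ)) ∧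
    (∀ i : Fin m, 1 ≤ (i : ℕ) → ∀ h : (i : ℕ) + 1 < m,
      lam i + (t.1 i : ℚ) - (t.2 i : ℚ) ≤
        lam ⟨(i : ℕ) + 1, h⟩ - (t.2 ⟨(i : ℕ) + 1, h⟩ : ℚ)) ∧
    (∀ h : 1 < m,
      (t.1 ⟨0, by omega⟩ = 0 → 0 ≤ γ ⟨0, by omega⟩ →
        lam ⟨0, by omega⟩ - (t.2 ⟨0, by omega⟩ : ℚ) ≤ lam ⟨1, h⟩ - (t.2 ⟨1, h⟩ : ℚ)) ∧
      (t.2 ⟨0, by omega⟩ = 0 → 0 ≤ γ ⟨0, by omega⟩ →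
        lam ⟨0, by omega⟩ + (t.1 ⟨0, by omega⟩ : ℚ) ≤ lam ⟨1, h⟩ - (t.2 ⟨1, h⟩ : ℚ)) ∧
      (t.2 ⟨0, by omega⟩ = 0 → γ ⟨0, by omega⟩ < 0 →
        -lam ⟨0, by omega⟩ - (t.1 ⟨0, by omega⟩ : ℚ) ≤ lam ⟨1, h⟩ - (t.2 ⟨1, h⟩ : ℚ)) ∧
      (t.1 ⟨0, by omega⟩ = 0 → γ ⟨0, by omega⟩ < 0 →
        -lam ⟨0, by omega⟩ + (t.2 ⟨0, by omega⟩ : ℚ) ≤ lam ⟨1, h⟩ - (t.2 ⟨1, h⟩ : ℚ)))}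

/-- The monomial `x^β = ∏ y_i ^ (2 β_i)` in the Laurent polynomial ring
`ℤ[y_1^{±1}, …, y_n^{±1}]`, realized as the group algebra of `ℤ^n`. -/
def xpow {n : ℕ} (β : Fin n → ℚ) : AddMonoidAlgebra ℤ (Fin n → ℤ) :=
  AddMonoidAlgebra.single (fun i => ⌊2 * β i⌋) 1

/-- The Weyl alternant `a_β = ∑_{σ ∈ W_{B_n}} det σ · x^{σ β}` of type `B_n`. -/
def altB {n : ℕ} (β : Fin n → ℚ) : AddMonoidAlgebra ℤ (Fin n → ℤ) :=
  ∑ σ : Equiv.Perm (Fin n), ∑ ε : Fin n → Bool, wDet σ ε • xpow (wAct σ ε β)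

/-- The Weyl alternant `a_β = ∑_{σ ∈ W_{D_n}} det σ · x^{σ β}` of type `D_n`. -/
def altD {n : ℕ} (β : Fin n → ℚ) : AddMonoidAlgebra ℤ (Fin n → ℤ) :=
  ∑ σ : Equiv.Perm (Fin n), ∑ ε : Fin n → Bool,
    if (∏ i, (if ε i then (-1 : ℤ) else 1)) = 1 then wDet σ ε • xpow (wAct σ ε β) else 0

end

/-! ### Abstract determinant expansions -/

theorem pb_det_expand {N : ℕ} {R : Type*} [CommRing R] (S : Fin N → Finset ℕ)
    (c : Fin N → ℕ → R) (v : ℕ → Fin N → R) :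
    Matrix.det (Matrix.of fun i => ∑ m ∈ S i, c i m • v m) =
      ∑ m ∈ Fintype.piFinset S, (∏ i, c i (m i)) *
        Matrix.det (Matrix.of fun i => v (m i)) := by
  have h := (Matrix.detRowAlternating (n := Fin N) (R := R)).toMultilinearMap.map_sum_finset
    (fun i m => c i m • v m) S
  refine h.trans (Finset.sum_congr rfl fun m _ => ?_)
  exact (Matrix.detRowAlternating (n := Fin N) (R := R)).toMultilinearMap.map_smul_univ
    (fun i => c i (m i)) (fun i => v (m i))

section Abstract

variable {R : Type*} [CommRing R] {M : Type*} [AddCommGroup M] [Module R M]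

theorem pb_a_step (t : R) (a u : ℕ → M) (ha : ∀ m, a (m + 1) = t • a m + u (m + 1))
    (b d : ℕ) :
    a (b + d) = ∑ m ∈ Finset.Ico (b + 1) (b + d + 1), t ^ (b + d - m) • u m + t ^ d • a b := by
  induction d with
  | zero => simp
  | succ d ih =>
    rw [← add_assoc, ha, ih, Finset.sum_Ico_succ_top (b := b + d + 1) (by omega), smul_add, Finset.smul_sum]
    have : ∑ m ∈ Finset.Ico (b + 1) (b + d + 1), t • t ^ (b + d - m) • u m =
        ∑ m ∈ Finset.Ico (b + 1) (b + d + 1), t ^ (b + d + 1 - m) • u m := by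
      refine Finset.sum_congr rfl fun m hm => ?_
      rw [Finset.mem_Ico] at hm
      rw [smul_smul, ← pow_succ', show b + d + 1 - m = b + d - m + 1 by omega]
    rw [this]
    simp only [Nat.sub_self, pow_zero, one_smul, smul_smul, ← pow_succ']
    abel

theorem pb_a_base (t δ : R) (a u : ℕ → M) (ha : ∀ m, a (m + 1) = t • a m + u (m + 1))
    (h0 : (1 + t) • a 0 = δ • u 0) (b : ℕ) :
    (1 + t) • a b = ∑ m ∈ Finset.Ico 0 (b + 1),
      ((if m = 0 then δ else 1 + t) * t ^ (b - m)) • u m := by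
  have h := pb_a_step t a u ha 0 b
  rw [Finset.sum_eq_sum_Ico_succ_bot (by omega)]
  simp only [zero_add] at h
  rw [h, smul_add, smul_comm (1 + t) (t ^ b), h0, Finset.smul_sum, add_comm]
  congr 1
  · simp [smul_smul, mul_comm]
  · refine Finset.sum_congr rfl fun m hm => ?_
    rw [Finset.mem_Ico] at hm
    rw [if_neg (by omega), smul_smul]

theorem pb_u_step (t : R) (s u : ℕ → M) (hu : ∀ m, u m = s m + t • u (m + 1)) (m d : ℕ) :
    u m = ∑ l ∈ Finset.Ico m (m + d), t ^ (l - m) • s l + t ^ d • u (m + d) := by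
  induction d with
  | zero => simp
  | succ d ih =>
    rw [← add_assoc, Finset.sum_Ico_succ_top (by omega)]
    conv_lhs => rw [ih, hu (m + d)]
    rw [smul_add, smul_smul, ← pow_succ, Nat.add_sub_cancel_left, ← add_assoc]

end Abstract

def pbLo {N : ℕ} (b : Fin (N + 1) → ℕ) : Fin (N + 1) → ℕ :=
  Fin.cons 0 fun i : Fin N => b i.castSucc + 1

def pbHi {N : ℕ} (m : Fin (N + 1) → ℕ) (L : ℕ) : Fin (N + 1) → ℕ :=
  Fin.snoc (fun i : Fin N => m i.succ) (L + 1)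

theorem pb_down {N : ℕ} {R : Type*} [CommRing R] (t δ : R) (a u : ℕ → Fin (N + 1) → R)
    (ha : ∀ m, a (m + 1) = t • a m + u (m + 1)) (h0 : (1 + t) • a 0 = δ • u 0)
    (b : Fin (N + 1) → ℕ) (hb : StrictMono b) :
    (1 + t) * Matrix.det (Matrix.of fun i => a (b i)) =
      ∑ m ∈ Fintype.piFinset fun i => Finset.Ico (pbLo b i) (b i + 1),
        ((if m 0 = 0 then δ else 1 + t) * t ^ (∑ i, (b i - m i))) *
          Matrix.det (Matrix.of fun i => u (m i)) := by
  have hc : ∀ i : Fin N, b i.castSucc < b i.succ := fun i => hb (Fin.castSucc_lt_succ)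
  set B : Matrix (Fin (N + 1)) (Fin (N + 1)) R := Matrix.of <| Fin.cons (a (b 0)) fun i : Fin N =>
    ∑ m ∈ Finset.Ico (b i.castSucc + 1) (b i.succ + 1), t ^ (b i.succ - m) • u m with hB
  have h1 : Matrix.det (Matrix.of fun i => a (b i)) = B.det := by
    refine Matrix.det_eq_of_forall_row_eq_smul_add_pred
      (fun i => t ^ (b i.succ - b i.castSucc)) (fun j => rfl) fun i j => ?_
    have := pb_a_step t a u ha (b i.castSucc) (b i.succ - b i.castSucc)
    rw [Nat.add_sub_cancel' (hc i).le] at this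
    have := congrFun this j
    simpa [hB] using this
  have h2 : (1 + t) * B.det = (B.updateRow 0 ((1 + t) • B 0)).det := by
    rw [Matrix.det_updateRow_smul, Matrix.updateRow_eq_self]
  have h3 : B.updateRow 0 ((1 + t) • B 0) = Matrix.of fun i => ∑ m ∈ Finset.Ico (pbLo b i) (b i + 1),
      ((if i = 0 then (if m = 0 then δ else 1 + t) else 1) * t ^ (b i - m)) • u m := by
    funext i
    refine Fin.cases ?_ (fun i => ?_) i
    · rw [Matrix.updateRow_self]
      exact pb_a_base t δ a u ha h0 (b 0)
    · rw [Matrix.updateRow_ne (Fin.succ_ne_zero i)]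
      change ∑ m ∈ Finset.Ico (b i.castSucc + 1) (b i.succ + 1), t ^ (b i.succ - m) • u m =
        ∑ m ∈ Finset.Ico (b i.castSucc + 1) (b i.succ + 1),
          ((if i.succ = 0 then (if m = 0 then δ else 1 + t) else 1) * t ^ (b i.succ - m)) • u m
      simp only [Fin.succ_ne_zero, if_false, one_mul]
  rw [h1, h2, h3, pb_det_expand]
  refine Finset.sum_congr rfl fun m _ => ?_
  congr 1
  rw [Finset.prod_mul_distrib, Finset.prod_pow_eq_pow_sum]
  congr 1
  rw [Finset.prod_ite_eq' Finset.univ (0 : Fin (N + 1))]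
  simp

theorem pb_det_succ {N : ℕ} {R : Type*} [CommRing R]
    {A B : Matrix (Fin (N + 1)) (Fin (N + 1)) R} (c : Fin N → R)
    (h0 : ∀ j, A (Fin.last N) j = B (Fin.last N) j)
    (h1 : ∀ (i : Fin N) (j), A i.castSucc j = B i.castSucc j + c i * A i.succ j) :
    A.det = B.det := by
  rw [← Matrix.det_submatrix_equiv_self Fin.revPerm B,
    ← Matrix.det_submatrix_equiv_self Fin.revPerm A]
  refine Matrix.det_eq_of_forall_row_eq_smul_add_pred (fun i => c i.rev) (fun j => ?_)
    fun i j => ?_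
  · simpa using h0 j.rev
  · simpa [Fin.rev_succ, Fin.rev_castSucc] using h1 i.rev j.rev

theorem pb_up {N : ℕ} {R : Type*} [CommRing R] (t : R) (s u : ℕ → Fin (N + 1) → R)
    (hu : ∀ m, u m = s m + t • u (m + 1)) (m : Fin (N + 1) → ℕ) (hm : StrictMono m)
    (L : ℕ) (hL : m (Fin.last N) ≤ L) :
    Matrix.det (Matrix.of fun i => u (m i)) =
      ∑ l ∈ Fintype.piFinset fun i => Finset.Ico (m i) (pbHi m L i),
        t ^ (∑ i, (l i - m i)) *
          Matrix.det (Matrix.of fun i => if l i < L then s (l i) else u L) := by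
  have hc : ∀ i : Fin N, m i.castSucc < m i.succ := fun i => hm (Fin.castSucc_lt_succ)
  have hl : ∀ i : Fin (N + 1), m i ≤ L := fun i => (hm.monotone (Fin.le_last i)).trans hL
  set B : Matrix (Fin (N + 1)) (Fin (N + 1)) R :=
    Matrix.of fun i => ∑ l ∈ Finset.Ico (m i) (pbHi m L i), t ^ (l - m i) • (if l < L then s l else u L)
    with hB
  have h1 : Matrix.det (Matrix.of fun i => u (m i)) = B.det := by
    refine pb_det_succ (fun i => t ^ (m i.succ - m i.castSucc)) (fun j => ?_) fun i j => ?_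
    · have := pb_u_step t s u hu (m (Fin.last N)) (L - m (Fin.last N))
      rw [Nat.add_sub_cancel' hL] at this
      simp only [hB, pbHi, Fin.snoc_last, Matrix.of_apply]
      rw [Finset.sum_Ico_succ_top hL, this, if_neg (lt_irrefl _)]
      refine congrFun (congrArg (· + _) (Finset.sum_congr rfl fun l hl => ?_)) j
      rw [Finset.mem_Ico] at hl
      rw [if_pos hl.2]
    · have := pb_u_step t s u hu (m i.castSucc) (m i.succ - m i.castSucc)
      rw [Nat.add_sub_cancel' (hc _).le] at this
      simp only [hB, pbHi, Fin.snoc_castSucc, Matrix.of_apply]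
      have h2 := congrFun this j
      rw [h2]
      simp only [Pi.add_apply, Pi.smul_apply, smul_eq_mul]
      congr 1
      refine congrFun (Finset.sum_congr rfl fun l hl' => ?_) j
      rw [Finset.mem_Ico] at hl'
      rw [if_pos (hl'.2.trans_le (hl _))]
  rw [h1, hB, pb_det_expand]
  refine Finset.sum_congr rfl fun l _ => ?_
  rw [Finset.prod_pow_eq_pow_sum]

/-! ### The alternant as a determinant -/

noncomputable def pbY {n : ℕ} (j : Fin n) (p : ℤ) : AddMonoidAlgebra ℤ (Fin n → ℤ) :=
  AddMonoidAlgebra.single (Pi.single j p) 1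

theorem pbY_mul {n : ℕ} (j : Fin n) (p q : ℤ) : pbY j p * pbY j q = pbY j (p + q) := by
  simp [pbY, AddMonoidAlgebra.single_mul_single, Pi.single_add]

theorem pbY_zero {n : ℕ} (j : Fin n) : pbY j 0 = 1 := by
  simp [pbY, AddMonoidAlgebra.one_def]

theorem pbY_pow {n : ℕ} (j : Fin n) (p : ℤ) (k : ℕ) : pbY j p ^ k = pbY j (p * k) := by
  induction k with
  | zero => simp [pbY_zero]
  | succ k ih => rw [pow_succ, ih, pbY_mul]; congr 1; push_cast; ring

theorem pbY_prod {n : ℕ} (p : Fin n → ℤ) :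
    ∏ j, pbY j (p j) = AddMonoidAlgebra.single p 1 := by
  have h : ∀ s : Finset (Fin n), ∏ j ∈ s, pbY j (p j) =
      AddMonoidAlgebra.single (∑ j ∈ s, Pi.single j (p j)) (1 : ℤ) := by
    intro s
    induction s using Finset.induction_on with
    | empty => simp [AddMonoidAlgebra.one_def]
    | insert a s ha ih =>
      rw [Finset.prod_insert ha, ih, Finset.sum_insert ha, pbY,
        AddMonoidAlgebra.single_mul_single, one_mul]
  rw [h, Finset.univ_sum_single]

theorem pb_altB_eq {n : ℕ} (β : Fin n → ℚ) (p : Fin n → ℤ) (h : ∀ i, 2 * β i = p i) :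
    altB β = Matrix.det (Matrix.of fun i j => pbY j (p i) - pbY j (-p i)) := by
  rw [Matrix.det_apply', altB]
  refine Finset.sum_bij' (fun σ _ => σ⁻¹) (fun σ _ => σ⁻¹) (by simp) (by simp) (by simp)
    (by simp) fun σ _ => ?_
  have h1 : ∀ j, pbY j (p (σ⁻¹ j)) - pbY j (-p (σ⁻¹ j)) =
      ∑ e : Bool, (if e then (-1 : ℤ) else 1) •
        pbY j ((if e then (-1 : ℤ) else 1) * p (σ⁻¹ j)) := by
    intro j
    simp [sub_eq_neg_add]
  simp only [Matrix.of_apply]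
  rw [Finset.prod_congr rfl fun j _ => h1 j]
  rw [Fintype.prod_sum, Finset.mul_sum]
  refine Finset.sum_congr rfl fun ε _ => ?_
  rw [wDet, mul_smul, Equiv.Perm.sign_inv, zsmul_eq_mul]
  congr 1
  have h2 : ∀ j, ((if ε j then (-1 : ℤ) else 1) •
      pbY j ((if ε j then (-1 : ℤ) else 1) * p (σ⁻¹ j))) =
      ((if ε j then (-1 : ℤ) else 1 : ℤ) : AddMonoidAlgebra ℤ (Fin n → ℤ)) *
      pbY j ((if ε j then (-1 : ℤ) else 1) * p (σ⁻¹ j)) := fun j => zsmul_eq_mul _ _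
  simp only [h2]
  rw [Finset.prod_mul_distrib, pbY_prod, zsmul_eq_mul, Int.cast_prod, xpow]
  congr 2
  funext i
  rw [Int.floor_eq_iff]
  have h3 : 2 * wAct σ ε β i = (((if ε i then (-1 : ℤ) else 1) * p (σ⁻¹ i) : ℤ) : ℚ) := by
    push_cast
    rw [← h, wAct]
    split_ifs <;> ring
  rw [h3]
  constructor <;> linarith

/-! ### Generating functions -/

open PowerSeries in
theorem pb_geom {A : Type*} [CommRing A] (x : A) :
    (PowerSeries.mk fun k => x ^ k) = 1 + X * PowerSeries.C x * PowerSeries.mk fun k => x ^ k := by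
  ext k
  rw [mul_assoc]
  cases k with
  | zero => simp
  | succ k => simp [coeff_succ_X_mul, pow_succ', coeff_one]

noncomputable def pbG {n : ℕ} (j : Fin n) (p : ℤ) :
    PowerSeries (AddMonoidAlgebra ℤ (Fin n → ℤ)) := PowerSeries.mk fun k => pbY j p ^ k

theorem pbG_eq {n : ℕ} (j : Fin n) (p : ℤ) :
    pbG j p = 1 + PowerSeries.X * PowerSeries.C (pbY j p) * pbG j p := pb_geom _

noncomputable def pbS {n : ℕ} (δ m : ℕ) (j : Fin n) :
    PowerSeries (AddMonoidAlgebra ℤ (Fin n → ℤ)) :=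
  PowerSeries.C (pbY j (2 * m + δ)) - PowerSeries.C (pbY j (-(2 * m + δ)))

noncomputable def pbU {n : ℕ} (δ m : ℕ) (j : Fin n) :
    PowerSeries (AddMonoidAlgebra ℤ (Fin n → ℤ)) :=
  PowerSeries.C (pbY j (2 * m + δ)) * pbG j 2 - PowerSeries.C (pbY j (-(2 * m + δ))) * pbG j (-2)

noncomputable def pbA {n : ℕ} (δ m : ℕ) (j : Fin n) :
    PowerSeries (AddMonoidAlgebra ℤ (Fin n → ℤ)) :=
  (pbG j (-2) * pbG j 2) * pbS δ m j

theorem pbU_step {n : ℕ} (δ m : ℕ) :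
    pbU (n := n) δ m = pbS δ m + (PowerSeries.X :
      PowerSeries (AddMonoidAlgebra ℤ (Fin n → ℤ))) • pbU δ (m + 1) := by
  funext j
  have h1 := pbG_eq j 2
  have h2 := pbG_eq j (-2)
  have e1 : PowerSeries.C (pbY j (2 * ((m + 1 : ℕ) : ℤ) + δ)) =
      PowerSeries.C (pbY j (2 * m + δ)) * PowerSeries.C (pbY j 2) := by
    rw [← map_mul, pbY_mul]; congr 2; push_cast; ring
  have e2 : PowerSeries.C (pbY j (-(2 * ((m + 1 : ℕ) : ℤ) + δ))) =
      PowerSeries.C (pbY j (-(2 * m + δ))) * PowerSeries.C (pbY j (-2)) := by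
    rw [← map_mul, pbY_mul]; congr 2; push_cast; ring
  simp only [pbU, pbS, Pi.add_apply, Pi.smul_apply, smul_eq_mul, e1, e2]
  linear_combination PowerSeries.C (pbY j (2 * m + δ)) * h1 -
    PowerSeries.C (pbY j (-(2 * m + δ))) * h2

theorem pbA_step {n : ℕ} (δ m : ℕ) :
    pbA (n := n) δ (m + 1) = (PowerSeries.X :
      PowerSeries (AddMonoidAlgebra ℤ (Fin n → ℤ))) • pbA δ m + pbU δ (m + 1) := by
  funext j
  have h1 := pbG_eq j 2
  have h2 := pbG_eq j (-2)
  have e1 : PowerSeries.C (pbY j (2 * m + δ)) =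
      PowerSeries.C (pbY j (2 * ((m + 1 : ℕ) : ℤ) + δ)) * PowerSeries.C (pbY j (-2)) := by
    rw [← map_mul, pbY_mul]; congr 2; push_cast; ring
  have e2 : PowerSeries.C (pbY j (-(2 * m + δ))) =
      PowerSeries.C (pbY j (-(2 * ((m + 1 : ℕ) : ℤ) + δ))) * PowerSeries.C (pbY j 2) := by
    rw [← map_mul, pbY_mul]; congr 2; push_cast; ring
  simp only [pbA, pbU, pbS, Pi.add_apply, Pi.smul_apply, smul_eq_mul, e1, e2]
  linear_combination PowerSeries.C (pbY j (2 * ((m + 1 : ℕ) : ℤ) + δ)) * pbG j 2 * h2 -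
    PowerSeries.C (pbY j (-(2 * ((m + 1 : ℕ) : ℤ) + δ))) * pbG j (-2) * h1

theorem pbA_zero {n : ℕ} (δ : ℕ) (hδ : δ = 0 ∨ δ = 1) :
    (1 + PowerSeries.X : PowerSeries (AddMonoidAlgebra ℤ (Fin n → ℤ))) • pbA (n := n) δ 0 =
      (δ : PowerSeries (AddMonoidAlgebra ℤ (Fin n → ℤ))) • pbU δ 0 := by
  funext j
  have h1 := pbG_eq j 2
  have h2 := pbG_eq j (-2)
  rcases hδ with rfl | rfl
  · simp [pbA, pbS]
  · have e1 : PowerSeries.C (pbY j 1) * PowerSeries.C (pbY j (-2)) =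
      PowerSeries.C (pbY j (-1)) := by
      rw [← map_mul, pbY_mul]; congr 2
    have e2 : PowerSeries.C (pbY j (-1)) * PowerSeries.C (pbY j 2) =
      PowerSeries.C (pbY j 1) := by
      rw [← map_mul, pbY_mul]; congr 2
    simp only [pbA, pbS, pbU, Pi.smul_apply, smul_eq_mul]
    simp only [Nat.cast_zero, Nat.cast_one, mul_zero, zero_add, one_mul]
    linear_combination PowerSeries.C (pbY j 1) * pbG j 2 * h2 -
      PowerSeries.C (pbY j (-1)) * pbG j (-2) * h1 +
      PowerSeries.X * pbG j 2 * pbG j (-2) * (e1 - e2)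

theorem pb_trunc {n : ℕ} (r : ℕ) (j : Fin n) (p : ℤ) :
    (PowerSeries.X ^ (r + 1) : PowerSeries (AddMonoidAlgebra ℤ (Fin n → ℤ))) ∣
      pbG j p - ∑ k : Fin (r + 1), PowerSeries.X ^ (k : ℕ) * PowerSeries.C (pbY j (p * k)) := by
  rw [PowerSeries.X_pow_dvd_iff]
  intro m hm
  rw [map_sub, map_sum, pbG, PowerSeries.coeff_mk,
    Finset.sum_eq_single (⟨m, hm⟩ : Fin (r + 1))]
  · rw [PowerSeries.coeff_X_pow_mul', if_pos le_rfl, Nat.sub_self, PowerSeries.coeff_zero_C,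
      pbY_pow, sub_self]
  · intro k _ hk
    rw [PowerSeries.coeff_X_pow_mul']
    split_ifs with h
    · rw [PowerSeries.coeff_C, if_neg]
      intro h'
      apply hk
      ext
      simp only
      omega
    · rfl
  · simp

theorem pb_H {n : ℕ} (r : ℕ) :
    PowerSeries.coeff r ((1 + PowerSeries.X) * ∏ j : Fin n, (pbG j (-2) * pbG j 2)) =
      ∑ t : (Fin n → Fin (r + 1)) × (Fin n → Fin (r + 1)) × Bool,
        if (cond t.2.2 1 0) + ∑ i, ((t.1 i : ℕ) + (t.2.1 i : ℕ)) = r then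
          xpow (fun i => ((t.2.1 i : ℕ) : ℚ) - ((t.1 i : ℕ) : ℚ))
        else 0 := by
  set F : Fin n → ℤ → PowerSeries (AddMonoidAlgebra ℤ (Fin n → ℤ)) := fun j p =>
    ∑ k : Fin (r + 1), PowerSeries.X ^ (k : ℕ) * PowerSeries.C (pbY j (p * k)) with hF
  have h1 : (PowerSeries.X ^ (r + 1) : PowerSeries (AddMonoidAlgebra ℤ (Fin n → ℤ))) ∣
      (1 + PowerSeries.X) * ∏ j : Fin n, (pbG j (-2) * pbG j 2) -
      (1 + PowerSeries.X) * ∏ j : Fin n, (F j (-2) * F j 2) := by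
    rw [← Ideal.mem_span_singleton, ← Ideal.Quotient.eq]
    have h2 : ∀ j p, Ideal.Quotient.mk (Ideal.span {(PowerSeries.X ^ (r + 1) :
        PowerSeries (AddMonoidAlgebra ℤ (Fin n → ℤ)))}) (pbG j p) =
        Ideal.Quotient.mk _ (F j p) := by
      intro j p
      rw [Ideal.Quotient.eq, Ideal.mem_span_singleton]
      exact pb_trunc r j p
    simp only [map_mul, map_prod, h2]
  rw [PowerSeries.X_pow_dvd_iff] at h1
  have h3 := h1 r (Nat.lt_succ_self r)
  rw [map_sub, sub_eq_zero] at h3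
  rw [h3]
  have h4 : (1 + PowerSeries.X : PowerSeries (AddMonoidAlgebra ℤ (Fin n → ℤ))) =
      ∑ e : Bool, PowerSeries.X ^ (cond e 1 0) := by
    simp [add_comm]
  rw [Finset.prod_mul_distrib, h4]
  simp only [hF]
  rw [Fintype.prod_sum, Fintype.prod_sum, mul_comm, mul_assoc]
  simp only [Finset.sum_mul, Fintype.sum_prod_type]
  rw [map_sum]
  refine Finset.sum_congr rfl fun k _ => ?_
  rw [Finset.mul_sum, map_sum]
  refine Finset.sum_congr rfl fun k' _ => ?_
  rw [Finset.mul_sum, Finset.mul_sum, map_sum]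
  refine Finset.sum_congr rfl fun e _ => ?_
  have h5 : (∏ i, PowerSeries.X ^ (k i : ℕ) * PowerSeries.C (pbY i (-2 * (k i : ℕ)))) *
      ((∏ i, PowerSeries.X ^ (k' i : ℕ) * PowerSeries.C (pbY i (2 * (k' i : ℕ)))) *
        PowerSeries.X ^ (cond e 1 0)) =
      (PowerSeries.X ^ ((cond e 1 0) + ∑ i, ((k i : ℕ) + (k' i : ℕ))) :
        PowerSeries (AddMonoidAlgebra ℤ (Fin n → ℤ))) *
        PowerSeries.C (xpow (fun i => ((k' i : ℕ) : ℚ) - ((k i : ℕ) : ℚ))) := by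
    have h6 : xpow (fun i => ((k' i : ℕ) : ℚ) - ((k i : ℕ) : ℚ)) =
        ∏ i, pbY i (-2 * (k i : ℕ)) * pbY i (2 * (k' i : ℕ)) := by
      simp only [pbY_mul]
      rw [pbY_prod, xpow]
      congr 1
      funext i
      rw [Int.floor_eq_iff]
      push_cast
      constructor <;> linarith
    rw [h6, map_prod, pow_add, ← Finset.prod_pow_eq_pow_sum]
    simp only [map_mul, pow_add, Finset.prod_mul_distrib]
    ring
  rw [h5, PowerSeries.coeff_X_pow_mul']
  split_ifs with h h' h'
  · rw [h', Nat.sub_self, PowerSeries.coeff_zero_C]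
  · rw [PowerSeries.coeff_C, if_neg (by omega)]
  · omega
  · rfl

theorem pb_lo_hi {N : ℕ} {b m : Fin (N + 1) → ℕ}
    (hm : m ∈ Fintype.piFinset fun i => Finset.Ico (pbLo b i) (b i + 1)) :
    (∀ i, m i ≤ b i) ∧ ∀ i : Fin N, b i.castSucc < m i.succ := by
  rw [Fintype.mem_piFinset] at hm
  simp only [Finset.mem_Ico] at hm
  refine ⟨fun i => by have := (hm i).2; omega, fun i => ?_⟩
  have := (hm i.succ).1
  simp only [pbLo, Fin.cons_succ] at this
  omega

theorem pb_hi_mem {N : ℕ} {m l : Fin (N + 1) → ℕ} {L : ℕ} :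
    (l ∈ Fintype.piFinset fun i => Finset.Ico (m i) (pbHi m L i)) ↔
    (∀ i, m i ≤ l i) ∧ (∀ i : Fin N, l i.castSucc < m i.succ) ∧ l (Fin.last N) ≤ L := by
  rw [Fintype.mem_piFinset]
  simp only [Finset.mem_Ico, forall_and]
  rw [Fin.forall_fin_succ' (P := fun i => l i < pbHi m L i)]
  simp only [pbHi, Fin.snoc_castSucc, Fin.snoc_last, Nat.lt_succ_iff]

theorem pb_lo_mem {N : ℕ} {b m : Fin (N + 1) → ℕ} :
    (m ∈ Fintype.piFinset fun i => Finset.Ico (pbLo b i) (b i + 1)) ↔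
    (∀ i, m i ≤ b i) ∧ ∀ i : Fin N, b i.castSucc < m i.succ := by
  refine ⟨pb_lo_hi, fun h => ?_⟩
  rw [Fintype.mem_piFinset]
  intro i
  rw [Finset.mem_Ico]
  refine ⟨?_, Nat.lt_succ_of_le (h.1 i)⟩
  refine Fin.cases ?_ (fun i => ?_) i
  · simp [pbLo]
  · simp only [pbLo, Fin.cons_succ]
    exact h.2 i

theorem pb_altB_C {n : ℕ} (δ : ℕ) (b : Fin n → ℕ) :
    PowerSeries.C (altB fun i => (b i : ℚ) + (δ : ℚ) / 2) =
      Matrix.det (Matrix.of fun i => pbS (n := n) δ (b i)) := by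
  rw [pb_altB_eq _ (fun i => 2 * (b i : ℤ) + δ) (by intro i; push_cast; ring), RingHom.map_det]
  congr 1
  ext1 i j
  simp [pbS, Matrix.map_apply]

theorem pb_main {N : ℕ} (δ : ℕ) (hδ : δ = 0 ∨ δ = 1) (b : Fin (N + 1) → ℕ) (hb : StrictMono b)
    (r : ℕ) :
    altB (fun i => (b i : ℚ) + (δ : ℚ) / 2) *
      (∑ t : (Fin (N + 1) → Fin (r + 1)) × (Fin (N + 1) → Fin (r + 1)) × Bool,
        if (cond t.2.2 1 0) + ∑ i, ((t.1 i : ℕ) + (t.2.1 i : ℕ)) = r then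
          xpow (fun i => ((t.2.1 i : ℕ) : ℚ) - ((t.1 i : ℕ) : ℚ))
        else 0) =
    ∑ m ∈ Fintype.piFinset fun i => Finset.Ico (pbLo b i) (b i + 1),
      ∑ l ∈ Fintype.piFinset fun i =>
          Finset.Ico (m i) (pbHi m (b (Fin.last N) + r + 1) i),
        ∑ e : Bool, if (m 0 = 0 → δ = 1 ∧ e = false) ∧
            (cond e 1 0) + (∑ i, (b i - m i)) + (∑ i, (l i - m i)) = r then
          altB (fun i => (l i : ℚ) + (δ : ℚ) / 2) else 0 := by
  rw [← pb_H, ← PowerSeries.coeff_C_mul, pb_altB_C]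
  have h1 : Matrix.det (Matrix.of fun i => pbS (n := N + 1) δ (b i)) *
      ((1 + PowerSeries.X) * ∏ j : Fin (N + 1), (pbG j (-2) * pbG j 2)) =
      (1 + PowerSeries.X) * Matrix.det (Matrix.of fun i => pbA (n := N + 1) δ (b i)) := by
    have := Matrix.det_mul_row (fun j : Fin (N + 1) => pbG j (-2) * pbG j 2)
      (Matrix.of fun i => pbS (n := N + 1) δ (b i))
    have h2 : (Matrix.of fun i => pbA (n := N + 1) δ (b i)) =
      Matrix.of fun i j => (pbG j (-2) * pbG j 2) *
        (Matrix.of fun i => pbS (n := N + 1) δ (b i)) i j := rfl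
    rw [h2, this]
    ring
  rw [h1, pb_down PowerSeries.X (δ : PowerSeries (AddMonoidAlgebra ℤ (Fin (N + 1) → ℤ)))
    (pbA δ) (pbU δ) (pbA_step δ) (pbA_zero δ hδ) b hb, map_sum]
  refine Finset.sum_congr rfl fun m hm => ?_
  obtain ⟨hm1, hm2⟩ := pb_lo_hi hm
  have hms : StrictMono m := Fin.strictMono_iff_lt_succ.2 fun i => (hm1 _).trans_lt (hm2 i)
  have hbl : ∀ i, b i ≤ b (Fin.last N) := fun i => hb.monotone (Fin.le_last i)
  rw [pb_up PowerSeries.X (pbS δ) (pbU δ) (pbU_step δ) m hms (b (Fin.last N) + r + 1)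
    (by have := hm1 (Fin.last N); omega), Finset.mul_sum, map_sum]
  refine Finset.sum_congr rfl fun l hl => ?_
  obtain ⟨hl1, hl2, hl3⟩ := pb_hi_mem.1 hl
  have hw : (if m 0 = 0 then (δ : PowerSeries (AddMonoidAlgebra ℤ (Fin (N + 1) → ℤ)))
      else 1 + PowerSeries.X) =
      ∑ e : Bool, if (m 0 = 0 → δ = 1 ∧ e = false) then PowerSeries.X ^ (cond e 1 0) else 0 := by
    rcases hδ with rfl | rfl <;> by_cases h : m 0 = 0 <;> simp [h, add_comm]
  rw [hw, Finset.sum_mul, Finset.sum_mul, map_sum]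
  refine Finset.sum_congr rfl fun e _ => ?_
  by_cases hP : (m 0 = 0 → δ = 1 ∧ e = false)
  swap
  · rw [if_neg hP, if_neg (fun h => hP h.1)]
    simp
  rw [if_pos hP, ← mul_assoc, ← pow_add, ← pow_add, PowerSeries.coeff_X_pow_mul']
  rcases Nat.lt_or_ge (l (Fin.last N)) (b (Fin.last N) + r + 1) with hlt | hge
  · have hall : ∀ i, l i < b (Fin.last N) + r + 1 := by
      intro i
      refine Fin.lastCases hlt (fun i => ?_) i
      have := hl2 i
      have := hm1 i.succ
      have := hbl i.succ
      omega
    have : (Matrix.of fun i => if l i < b (Fin.last N) + r + 1 then pbS δ (l i)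
        else pbU δ (b (Fin.last N) + r + 1)) = Matrix.of fun i => pbS (n := N + 1) δ (l i) := by
      congr 1
      funext i
      rw [if_pos (hall i)]
    rw [this, ← pb_altB_C, PowerSeries.coeff_C]
    split_ifs with h1 h2 h3 h3 h3
    all_goals first | rfl | (exfalso; first | omega | (exact h3 ⟨hP, by omega⟩))
  · have h5 : l (Fin.last N) - m (Fin.last N) ≤ ∑ i, (l i - m i) :=
      Finset.single_le_sum (f := fun i => l i - m i) (fun _ _ => Nat.zero_le _) (Finset.mem_univ _)
    have := hm1 (Fin.last N)
    rw [if_neg (by omega), if_neg (fun h => by have := h.2; omega)]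

/-! ### Combinatorics of the Pieri numbers -/

/-- The predicate defining the Pieri numbers. -/
def pbQ {m : ℕ} (γ lam : Fin m → ℚ) (r : ℕ) (t : (Fin m → ℕ) × (Fin m → ℕ) × Bool) : Prop :=
    ((cond t.2.2 1 0) + ∑ i, (t.1 i + t.2.1 i)) = r ∧
    (∀ i, ((t.2.1 i : ℚ) - (t.1 i : ℚ)) = lam i - γ i) ∧
    (∀ i : Fin m, ∀ h : (i : ℕ) + 1 < m,
      lam i ≤ lam ⟨(i : ℕ) + 1, h⟩ - (t.2.1 ⟨(i : ℕ) + 1, h⟩ : ℚ)) ∧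
    (∀ i : Fin m, ∀ h : (i : ℕ) + 1 < m,
      lam i + (t.1 i : ℚ) - (t.2.1 i : ℚ) ≤
        lam ⟨(i : ℕ) + 1, h⟩ - (t.2.1 ⟨(i : ℕ) + 1, h⟩ : ℚ)) ∧
    (∀ h : 0 < m,
      if t.2.2 then (0 : ℚ) < lam ⟨0, h⟩ - (t.2.1 ⟨0, h⟩ : ℚ)
      else (0 : ℚ) ≤ lam ⟨0, h⟩ - (t.2.1 ⟨0, h⟩ : ℚ))

def pbLam {m : ℕ} (γ : Fin m → ℚ) (t : (Fin m → ℕ) × (Fin m → ℕ) × Bool) : Fin m → ℚ :=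
  fun i => γ i + ((t.2.1 i : ℚ) - (t.1 i : ℚ))

theorem pbQ_lam {m : ℕ} {γ lam : Fin m → ℚ} {r : ℕ} {t : (Fin m → ℕ) × (Fin m → ℕ) × Bool}
    (h : pbQ γ lam r t) : pbLam γ t = lam := by
  funext i
  rw [pbLam, h.2.1]
  ring

def pbBox (m r : ℕ) : Finset ((Fin m → ℕ) × (Fin m → ℕ) × Bool) :=
  (Fintype.piFinset fun _ => Finset.range (r + 1)) ×ˢ
    (Fintype.piFinset fun _ => Finset.range (r + 1)) ×ˢ Finset.univ

theorem pbQ_box {m : ℕ} {γ lam : Fin m → ℚ} {r : ℕ} {t : (Fin m → ℕ) × (Fin m → ℕ) × Bool}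
    (h : pbQ γ lam r t) : t ∈ pbBox m r := by
  have h1 : ∀ i, t.1 i + t.2.1 i ≤ r := fun i => by
    have := Finset.single_le_sum (f := fun i => t.1 i + t.2.1 i) (fun _ _ => Nat.zero_le _)
      (Finset.mem_univ i)
    have := h.1
    omega
  simp only [pbBox, Finset.mem_product, Fintype.mem_piFinset, Finset.mem_range, Finset.mem_univ,
    and_true]
  exact ⟨fun i => by have := h1 i; omega, fun i => by have := h1 i; omega⟩

open Classical in
theorem pb_rhs {N : ℕ} (γ : Fin (N + 1) → ℚ) (hγ : DominantB γ) (r : ℕ) :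
    ∑ᶠ lam ∈ {lam : Fin (N + 1) → ℚ | DominantB lam ∧ ∀ i, ∃ z : ℤ, lam i - γ i = z},
      (bPieri γ lam r : ℤ) • altB (lam + rhoB (N + 1)) =
    ∑ t ∈ (pbBox (N + 1) r).filter (fun t => pbQ γ (pbLam γ t) r t),
      altB (pbLam γ t + rhoB (N + 1)) := by
  have hcard : ∀ lam, bPieri γ lam r =
      (((pbBox (N + 1) r).filter (fun t => pbQ γ (pbLam γ t) r t)).filter
        fun t => pbLam γ t = lam).card := by
    intro lam
    refine Nat.subtype_card _ fun t => ?_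
    simp only [Finset.mem_filter]
    constructor
    · rintro ⟨⟨_, h⟩, rfl⟩
      exact h
    · intro h
      have h' : pbQ γ lam r t := h
      refine ⟨⟨pbQ_box h', ?_⟩, pbQ_lam h'⟩
      rw [pbQ_lam h']
      exact h'
  rw [finsum_mem_eq_sum_of_subset (t := ((pbBox (N + 1) r).filter
    (fun t => pbQ γ (pbLam γ t) r t)).image (pbLam γ))]
  · rw [← Finset.sum_fiberwise_of_maps_to (g := pbLam γ)
      (fun t ht => Finset.mem_image_of_mem _ ht)]
    refine Finset.sum_congr rfl fun lam _ => ?_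
    rw [hcard, Finset.sum_congr rfl (g := fun _ => altB (lam + rhoB (N + 1))),
      Finset.sum_const, natCast_zsmul]
    intro t ht
    rw [(Finset.mem_filter.1 ht).2]
  · rintro lam ⟨_, h⟩
    rw [Function.mem_support] at h
    have h1 : bPieri γ lam r ≠ 0 := by
      intro h0
      apply h
      rw [h0]
      simp
    rw [hcard, ← Nat.pos_iff_ne_zero, Finset.card_pos] at h1
    obtain ⟨t, ht⟩ := h1
    rw [Finset.mem_filter] at ht
    rw [Finset.mem_coe, Finset.mem_image]
    exact ⟨t, ht⟩
  · intro lam hlam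
    rw [Finset.mem_coe, Finset.mem_image] at hlam
    obtain ⟨t, ht, rfl⟩ := hlam
    obtain ⟨_, hQ⟩ := Finset.mem_filter.1 ht
    obtain ⟨hr, _, h2, h3, h4⟩ := hQ
    have hmono : Monotone (pbLam γ t) := by
      refine Fin.monotone_iff_le_succ.2 fun i => ?_
      have h5 := h2 i.castSucc (by simp)
      have h6 : (0 : ℚ) ≤ (t.2.1 i.succ : ℚ) := Nat.cast_nonneg _
      have h7 : (⟨(i.castSucc : ℕ) + 1, by simp⟩ : Fin (N + 1)) = i.succ := rfl
      rw [h7] at h5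
      linarith
    have hint : ∀ i, pbLam γ t i = γ i + (((t.2.1 i : ℤ) - (t.1 i : ℤ) : ℤ) : ℚ) := by
      intro i
      rw [pbLam]
      push_cast
      rfl
    refine ⟨⟨hmono, fun i => ?_, ?_⟩, fun i => ⟨(t.2.1 i : ℤ) - (t.1 i : ℤ), ?_⟩⟩
    · refine le_trans ?_ (hmono (Fin.zero_le i))
      have h5 := h4 (Nat.succ_pos N)
      have h6 : (0 : ℚ) ≤ (t.2.1 ⟨0, Nat.succ_pos N⟩ : ℚ) := Nat.cast_nonneg _
      change (0 : ℚ) ≤ pbLam γ t ⟨0, Nat.succ_pos N⟩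
      split_ifs at h5 <;> linarith
    · rcases hγ.2.2 with h | h
      · left
        intro i
        obtain ⟨z, hz⟩ := h i
        refine ⟨z + ((t.2.1 i : ℤ) - (t.1 i : ℤ)), ?_⟩
        rw [hint, hz, ← Int.cast_add]
      · right
        intro i
        obtain ⟨z, hz⟩ := h i
        refine ⟨z + ((t.2.1 i : ℤ) - (t.1 i : ℤ)), ?_⟩
        rw [hint, hz, Int.cast_add]
        ring
    · rw [hint]
      ring

theorem pbQ_iff {N : ℕ} (δ : ℕ) (hδ : δ = 0 ∨ δ = 1) (b : Fin (N + 1) → ℕ)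
    (γ : Fin (N + 1) → ℚ) (hγ : ∀ i, γ i = (b i : ℚ) - ((i : ℕ) : ℚ) + ((δ : ℚ) - 1) / 2)
    (r : ℕ) (k k' : Fin (N + 1) → ℕ) (e : Bool) :
    pbQ γ (pbLam γ (k, k', e)) r (k, k', e) ↔
      (cond e 1 0) + ∑ i, (k i + k' i) = r ∧ (∀ i, k i ≤ b i) ∧
      (∀ i : Fin N, b i.castSucc + k i.succ < b i.succ) ∧
      (∀ i : Fin N, b i.castSucc + k' i.castSucc + k i.succ < b i.succ + k i.castSucc) ∧
      (b 0 - k 0 = 0 → δ = 1 ∧ e = false) := by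
  have hs : ∀ i : Fin N, ∀ h, (⟨(i.castSucc : ℕ) + 1, h⟩ : Fin (N + 1)) = i.succ :=
    fun i h => rfl
  have e2 : (∀ i : Fin (N + 1), ∀ h : (i : ℕ) + 1 < N + 1,
      pbLam γ (k, k', e) i ≤ pbLam γ (k, k', e) ⟨(i : ℕ) + 1, h⟩ - (k' ⟨(i : ℕ) + 1, h⟩ : ℚ)) ↔
      (∀ i : Fin N, b i.castSucc + k' i.castSucc + k i.succ < b i.succ + k i.castSucc) := by
    have key : ∀ i : Fin N, (pbLam γ (k, k', e) i.castSucc ≤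
        pbLam γ (k, k', e) i.succ - (k' i.succ : ℚ)) ↔
        b i.castSucc + k' i.castSucc + k i.succ < b i.succ + k i.castSucc := by
      intro i
      simp only [pbLam, hγ, Fin.val_succ, Fin.val_castSucc]
      rw [← Nat.succ_le_iff, ← Nat.cast_le (α := ℚ)]
      push_cast
      constructor <;> intro h <;> linarith
    constructor
    · intro h i
      exact (key i).1 (h i.castSucc (by simp))
    · intro h i hi
      exact (key ⟨i, by omega⟩).2 (h ⟨i, by omega⟩)
  have e3 : (∀ i : Fin (N + 1), ∀ h : (i : ℕ) + 1 < N + 1,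
      pbLam γ (k, k', e) i + (k i : ℚ) - (k' i : ℚ) ≤
        pbLam γ (k, k', e) ⟨(i : ℕ) + 1, h⟩ - (k' ⟨(i : ℕ) + 1, h⟩ : ℚ)) ↔
      (∀ i : Fin N, b i.castSucc + k i.succ < b i.succ) := by
    have key : ∀ i : Fin N, (pbLam γ (k, k', e) i.castSucc + (k i.castSucc : ℚ) -
        (k' i.castSucc : ℚ) ≤
        pbLam γ (k, k', e) i.succ - (k' i.succ : ℚ)) ↔
        b i.castSucc + k i.succ < b i.succ := by
      intro i
      simp only [pbLam, hγ, Fin.val_succ, Fin.val_castSucc]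
      rw [← Nat.succ_le_iff, ← Nat.cast_le (α := ℚ)]
      push_cast
      constructor <;> intro h <;> linarith
    constructor
    · intro h i
      exact (key i).1 (h i.castSucc (by simp))
    · intro h i hi
      exact (key ⟨i, by omega⟩).2 (h ⟨i, by omega⟩)
  have e4 : (∀ h : 0 < N + 1,
      if e then (0 : ℚ) < pbLam γ (k, k', e) ⟨0, h⟩ - (k' ⟨0, h⟩ : ℚ)
      else (0 : ℚ) ≤ pbLam γ (k, k', e) ⟨0, h⟩ - (k' ⟨0, h⟩ : ℚ)) ↔
      (k 0 ≤ b 0 ∧ (b 0 - k 0 = 0 → δ = 1 ∧ e = false)) := by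
    have h0 : pbLam γ (k, k', e) 0 - (k' 0 : ℚ) =
        ((b 0 : ℤ) - (k 0 : ℤ) : ℤ) + ((δ : ℚ) - 1) / 2 := by
      simp only [pbLam, hγ, Fin.val_zero]
      push_cast
      ring
    have h1 : (∀ h : 0 < N + 1,
      if e then (0 : ℚ) < pbLam γ (k, k', e) ⟨0, h⟩ - (k' ⟨0, h⟩ : ℚ)
      else (0 : ℚ) ≤ pbLam γ (k, k', e) ⟨0, h⟩ - (k' ⟨0, h⟩ : ℚ)) ↔
      (if e then (0 : ℚ) < pbLam γ (k, k', e) 0 - (k' 0 : ℚ)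
      else (0 : ℚ) ≤ pbLam γ (k, k', e) 0 - (k' 0 : ℚ)) :=
      ⟨fun h => h (Nat.succ_pos N), fun h _ => h⟩
    rw [h1, h0]
    have hz1 : ∀ z : ℤ, (0 : ℚ) < (z : ℚ) + ((1 : ℕ) - 1) / 2 ↔ 0 < z := by
      intro z; simp
    have hz2 : ∀ z : ℤ, (0 : ℚ) ≤ (z : ℚ) + ((1 : ℕ) - 1) / 2 ↔ 0 ≤ z := by
      intro z; simp
    have hz3 : ∀ z : ℤ, (0 : ℚ) < (z : ℚ) + ((0 : ℕ) - 1) / 2 ↔ 1 ≤ z := by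
      intro z
      constructor
      · intro h
        by_contra h'
        have h2 : z ≤ 0 := by omega
        have : (z : ℚ) ≤ 0 := by exact_mod_cast h2
        push_cast at h
        linarith
      · intro h
        have : (1 : ℚ) ≤ z := by exact_mod_cast h
        push_cast
        linarith
    have hz4 : ∀ z : ℤ, (0 : ℚ) ≤ (z : ℚ) + ((0 : ℕ) - 1) / 2 ↔ 1 ≤ z := by
      intro z
      constructor
      · intro h
        by_contra h'
        have h2 : z ≤ 0 := by omega
        have : (z : ℚ) ≤ 0 := by exact_mod_cast h2
        push_cast at h
        linarith
      · intro h
        have : (1 : ℚ) ≤ z := by exact_mod_cast h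
        push_cast
        linarith
    rcases hδ with rfl | rfl <;> cases e <;> simp only [hz1, hz2, hz3, hz4] <;> simp <;> omega
  constructor
  · rintro ⟨hr, _, h2, h3, h4⟩
    obtain ⟨h4, h5⟩ := e4.1 h4
    have h3' := e3.1 h3
    refine ⟨hr, fun i => ?_, h3', e2.1 h2, h5⟩
    refine Fin.cases h4 (fun i => ?_) i
    have := h3' i
    omega
  · rintro ⟨hr, hk, h3, h2, h4⟩
    refine ⟨hr, fun i => ?_, e2.2 h2, e3.2 h3, e4.2 ⟨hk 0, h4⟩⟩
    simp only [pbLam]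
    ring

open Classical in
theorem pb_core {N : ℕ} (δ : ℕ) (hδ : δ = 0 ∨ δ = 1) (b : Fin (N + 1) → ℕ)
    (hb : StrictMono b) (γ : Fin (N + 1) → ℚ)
    (hγ : ∀ i, γ i = (b i : ℚ) - ((i : ℕ) : ℚ) + ((δ : ℚ) - 1) / 2)
    (r : ℕ) :
    (∑ m ∈ Fintype.piFinset fun i => Finset.Ico (pbLo b i) (b i + 1),
      ∑ l ∈ Fintype.piFinset fun i =>
          Finset.Ico (m i) (pbHi m (b (Fin.last N) + r + 1) i),
        ∑ e : Bool, if (m 0 = 0 → δ = 1 ∧ e = false) ∧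
            (cond e 1 0) + (∑ i, (b i - m i)) + (∑ i, (l i - m i)) = r then
          altB (fun i => (l i : ℚ) + (δ : ℚ) / 2) else 0) =
    ∑ t ∈ (pbBox (N + 1) r).filter (fun t => pbQ γ (pbLam γ t) r t),
      altB (pbLam γ t + rhoB (N + 1)) := by
  simp only [Finset.sum_sigma']
  rw [← Finset.sum_filter]
  refine Finset.sum_nbij'
    (fun x => (fun i => b i - x.1 i, fun i => x.2.1 i - x.1 i, x.2.2))
    (fun t => ⟨fun i => b i - t.1 i, fun i => b i - t.1 i + t.2.1 i, t.2.2⟩) ?_ ?_ ?_ ?_ ?_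
  · rintro ⟨m, l, e⟩ hx
    simp only [Finset.mem_filter, Finset.mem_sigma, Finset.mem_univ, and_true, pb_lo_mem,
      pb_hi_mem] at hx
    obtain ⟨⟨⟨hm1, hm2⟩, hl1, hl2, hl3⟩, hx1, hx2⟩ := hx
    rw [Finset.mem_filter]
    have hQ : pbQ γ (pbLam γ (fun i => b i - m i, fun i => l i - m i, e)) r
        (fun i => b i - m i, fun i => l i - m i, e) := by
      rw [pbQ_iff δ hδ b γ hγ]
      refine ⟨?_, fun i => Nat.sub_le _ _, fun i => ?_, fun i => ?_, fun h => hx1 ?_⟩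
      · rw [Finset.sum_add_distrib]
        omega
      · have := hm1 i.succ
        have := hm2 i
        omega
      · have := hm1 i.succ
        have := hm1 i.castSucc
        have := hl1 i.castSucc
        have := hl2 i
        omega
      · have := hm1 0
        omega
    exact ⟨pbQ_box hQ, hQ⟩
  · rintro ⟨k, k', e⟩ ht
    obtain ⟨_, hQ⟩ := Finset.mem_filter.1 ht
    rw [pbQ_iff δ hδ b γ hγ] at hQ
    obtain ⟨hr, hk, h3, h2, h4⟩ := hQ
    simp only [Finset.mem_filter, Finset.mem_sigma, Finset.mem_univ, and_true, pb_lo_mem,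
      pb_hi_mem]
    refine ⟨⟨⟨fun i => Nat.sub_le _ _, fun i => ?_⟩, fun i => Nat.le_add_right _ _,
      fun i => ?_, ?_⟩, h4, ?_⟩
    · have := h3 i
      omega
    · have := h2 i
      have := hk i.castSucc
      omega
    · have := Finset.single_le_sum (f := fun i => k i + k' i) (fun _ _ => Nat.zero_le _)
        (Finset.mem_univ (Fin.last N))
      omega
    · rw [Finset.sum_add_distrib] at hr
      have h5 : ∑ i, (b i - (b i - k i)) = ∑ i, k i :=
        Finset.sum_congr rfl fun i _ => Nat.sub_sub_self (hk i)
      have h6 : ∑ i, (b i - k i + k' i - (b i - k i)) = ∑ i, k' i :=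
        Finset.sum_congr rfl fun i _ => Nat.add_sub_cancel_left _ _
      rw [h5, h6]
      omega
  · rintro ⟨m, l, e⟩ hx
    simp only [Finset.mem_filter, Finset.mem_sigma, Finset.mem_univ, and_true, pb_lo_mem,
      pb_hi_mem] at hx
    obtain ⟨⟨⟨hm1, hm2⟩, hl1, hl2, hl3⟩, hx1, hx2⟩ := hx
    have h1 : (fun i => b i - (b i - m i)) = m := funext fun i => Nat.sub_sub_self (hm1 i)
    have h2 : (fun i => b i - (b i - m i) + (l i - m i)) = l := funext fun i => by
      have := hm1 i
      have := hl1 i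
      omega
    simp only [h1, h2]
  · rintro ⟨k, k', e⟩ ht
    obtain ⟨_, hQ⟩ := Finset.mem_filter.1 ht
    rw [pbQ_iff δ hδ b γ hγ] at hQ
    obtain ⟨hr, hk, h3, h2, h4⟩ := hQ
    have h1 : (fun i => b i - (b i - k i)) = k := funext fun i => Nat.sub_sub_self (hk i)
    have h2 : (fun i => b i - k i + k' i - (b i - k i)) = k' := funext fun i =>
      Nat.add_sub_cancel_left _ _
    simp only [h1, h2]
  · rintro ⟨m, l, e⟩ hx
    simp only [Finset.mem_filter, Finset.mem_sigma, Finset.mem_univ, and_true, pb_lo_mem,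
      pb_hi_mem] at hx
    obtain ⟨⟨⟨hm1, hm2⟩, hl1, hl2, hl3⟩, hx1, hx2⟩ := hx
    congr 1
    funext i
    simp only [Pi.add_apply, pbLam, rhoB, hγ]
    rw [Nat.cast_sub (hm1 i), Nat.cast_sub (hl1 i)]
    ring

theorem pb_exists {N : ℕ} (γ : Fin (N + 1) → ℚ) (hγ : DominantB γ) :
    ∃ δ : ℕ, (δ = 0 ∨ δ = 1) ∧ ∃ b : Fin (N + 1) → ℕ, StrictMono b ∧
      ∀ i, γ i = (b i : ℚ) - ((i : ℕ) : ℚ) + ((δ : ℚ) - 1) / 2 := by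
  obtain ⟨hmono, hpos, hint⟩ := hγ
  have key : ∃ δ : ℕ, (δ = 0 ∨ δ = 1) ∧ ∃ z : Fin (N + 1) → ℤ, (∀ i, 0 ≤ z i) ∧
      ∀ i, γ i = (z i : ℚ) + ((δ : ℚ) - 1) / 2 := by
    rcases hint with h | h
    · choose z hz using h
      refine ⟨1, Or.inr rfl, z, fun i => ?_, fun i => by rw [hz]; simp⟩
      have := hpos i
      rw [hz] at this
      exact_mod_cast this
    · choose z hz using h
      refine ⟨0, Or.inl rfl, fun i => z i + 1, fun i => ?_, fun i => by rw [hz]; push_cast; ring⟩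
      have h1 := hpos i
      rw [hz] at h1
      have h2 : (0 : ℚ) ≤ ((z i + 1 : ℤ) : ℚ) := by push_cast; linarith
      exact_mod_cast h2
  obtain ⟨δ, hδ, z, hz0, hz⟩ := key
  have hcast : ∀ i, (((z i).toNat : ℕ) : ℤ) = z i := fun i => Int.toNat_of_nonneg (hz0 i)
  refine ⟨δ, hδ, fun i => (z i).toNat + (i : ℕ), ?_, fun i => ?_⟩
  · intro i j hij
    have h1 := hmono hij.le
    rw [hz, hz] at h1
    have h2 : (z i : ℚ) ≤ z j := by linarith
    have h3 : z i ≤ z j := by exact_mod_cast h2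
    have h4 : (i : ℕ) < (j : ℕ) := hij
    have := hcast i
    have := hcast j
    simp only
    omega
  · have h1 : (((z i).toNat : ℕ) : ℚ) = (z i : ℚ) := by
      exact_mod_cast congrArg (Int.cast : ℤ → ℚ) (hcast i)
    rw [hz]
    push_cast
    rw [h1]
    ring

/-- Pieri rule of type `B_n` at the level of Weyl alternants:
`a_{γ+ρ} · char V(rΛ_{n-1}) = ∑_λ b^λ_{γ,r} a_{λ+ρ}`. -/
theorem pieri_B (n : ℕ) (hn : 1 ≤ n) (γ : Fin n → ℚ) (hγ : DominantB γ) (r : ℕ) :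
    altB (γ + rhoB n) *
      (∑ t : (Fin n → Fin (r + 1)) × (Fin n → Fin (r + 1)) × Bool,
        if (cond t.2.2 1 0) + ∑ i, ((t.1 i : ℕ) + (t.2.1 i : ℕ)) = r then
          xpow (fun i => ((t.2.1 i : ℕ) : ℚ) - ((t.1 i : ℕ) : ℚ))
        else 0) =
    ∑ᶠ lam ∈ {lam : Fin n → ℚ | DominantB lam ∧ ∀ i, ∃ z : ℤ, lam i - γ i = z},
      (bPieri γ lam r : ℤ) • altB (lam + rhoB n) := by
  obtain ⟨N, rfl⟩ : ∃ N, n = N + 1 := ⟨n - 1, by omega⟩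
  obtain ⟨δ, hδ, b, hb, hγb⟩ := pb_exists γ hγ
  have h1 : γ + rhoB (N + 1) = fun i => (b i : ℚ) + (δ : ℚ) / 2 := by
    funext i
    simp only [Pi.add_apply, rhoB, hγb]
    ring
  rw [pb_rhs γ hγ r, h1, pb_main δ hδ b hb r, pb_core δ hδ b hb γ hγb r]
end

section
/- (Pieri rule for D_n, stated at the level of Weyl alternants.) Let n ≥ 2, let γ be a dominant weight of type D_n, and let r ∈ ℕ. In the Laurent polynomial ring ℤ[y_1^{±1},…,y_n^{±1}], where for β ∈ (ℤ/2)^n we write x^β = Π_{i=1}^n y_i^{2β_i} and a^{D_n}_β = Σ_{σ∈W_{D_n}} det(σ)·x^{σ(β)}, the following identity holds: a^{D_n}_{γ+ρ_{D_n}} · ( Σ x^{(k̄_n − k_n, …, k̄_1 − k_1)} ) = Σ_λ d^λ_{γ,r} · a^{D_n}_{λ+ρ_{D_n}}, where the sum on the left is over all tuples (k_1,…,k_n,k̄_1,…,k̄_n) ∈ ℕ^{2n} with min(k_1, k̄_1) = 0 and Σ_{i=1}^n (k_i + k̄_i) = r, and the sum on the right is over all dominant weights λ of type D_n with λ − γ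 ∈ ℤ^n (only finitely many terms are nonzero). (The left factor is the character of the irreducible so_{2n}-module V(rΛ_{n−1}), so d^λ_{γ,r} is the multiplicity of V(λ) in V(γ) ⊗ V(rΛ_{n−1}).) -/
open scoped BigOperators

def hh {R : Type*} [CommRing R] (q : R) (m : ℤ) : R := if Even m then q ^ (m.natAbs / 2) else 0
def KK {R : Type*} [CommRing R] (q s : R) (a b : ℤ) : R := hh q (a - b) + s * hh q (a + b)
noncomputable def DD {R : Type*} [CommRing R] {n : ℕ} (q s : R) (a b : Fin n → ℤ) : R :=
  (Matrix.of fun i j => KK q s (a i) (b j)).det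

section
variable {R : Type*} [CommRing R] (q s : R)

theorem hh_neg (m : ℤ) : hh q (-m) = hh q m := by simp [hh]

theorem hh_even {m : ℤ} (h : Even m) : hh q m = q ^ (m.natAbs / 2) := by simp [hh, h]

theorem KK_comm (a b : ℤ) : KK q s a b = KK q s b a := by
  unfold KK
  rw [← hh_neg q (a - b), neg_sub, add_comm a b]

theorem KK_neg (hs : s * s = 1) (a b : ℤ) : KK q s (-a) b = s * KK q s a b := by
  unfold KK
  rw [← hh_neg q (-a - b), ← hh_neg q (-a + b)]
  rw [show -(-a - b) = a + b by ring, show -(-a + b) = a - b by ring]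
  linear_combination (-(hh q (a + b))) * hs

def sg (a : ℤ) : R := if 0 ≤ a then 1 else s

theorem KK_abs (hs : s * s = 1) (a b : ℤ) : KK q s |a| b = sg s a * KK q s a b := by
  unfold sg
  split_ifs with h
  · rw [abs_of_nonneg h, one_mul]
  · rw [abs_of_neg (by omega), KK_neg q s hs]

theorem KK_abs_right (hs : s * s = 1) (a b : ℤ) : KK q s a |b| = sg s b * KK q s a b := by
  rw [KK_comm, KK_abs q s hs, KK_comm]

theorem scal1' (A a b : ℤ) (h0 : 0 ≤ a) (h1 : |b| ≤ a) (h2 : a ≤ A) (e1 : Even (A - a))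
    (e2 : Even (a - b)) : KK q s A b = q ^ ((A - a).natAbs / 2) * KK q s a b := by
  unfold KK
  have := abs_le.mp h1
  have e3 : Even (a + b) := by grind
  rw [hh_even q (show Even (A - b) by grind), hh_even q (show Even (A + b) by grind),
    hh_even q e2, hh_even q e3, mul_add, ← pow_add, mul_left_comm, ← pow_add]
  congr 3
  · grind
  · grind

theorem scal1 (hs : s * s = 1) (A a b : ℤ) (h1 : |b| ≤ |a|) (h2 : |a| ≤ A) (e1 : Even (A - a))
    (e2 : Even (a - b)) :
    KK q s A b = sg s a * q ^ ((A - |a|).natAbs / 2) * KK q s a b := by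
  have e1' : Even (A - |a|) := by rcases abs_choice a with h | h <;> rw [h] <;> grind
  have e2' : Even (|a| - b) := by rcases abs_choice a with h | h <;> rw [h] <;> grind
  rw [scal1' q s A |a| b (abs_nonneg _) h1 h2 e1' e2', KK_abs q s hs]
  ring

theorem scal2 (hs : s * s = 1) (A B a : ℤ) (h1 : |a| ≤ B) (h2 : B ≤ A) (e1 : Even (A - B))
    (e2 : Even (B - a)) :
    KK q s A B - sg s a * q ^ ((A - |a|).natAbs / 2) * KK q s a B
      = q ^ ((A - B).natAbs / 2) * (1 - q ^ (B - |a|).toNat) := by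
  have e2' : Even (B - |a|) := by rcases abs_choice a with h | h <;> rw [h] <;> grind
  rw [mul_right_comm, ← KK_abs q s hs]
  have h0 := abs_nonneg a
  generalize |a| = c at *
  unfold KK
  rw [hh_even q e1, hh_even q (show Even (A + B) by grind), hh_even q (show Even (c - B) by grind),
    hh_even q (show Even (c + B) by grind), add_mul, mul_assoc, ← pow_add, ← pow_add, mul_sub,
    ← pow_add]
  rw [show (c + B).natAbs / 2 + (A - c).natAbs / 2 = (A + B).natAbs / 2 by grind,
    show (A - B).natAbs / 2 + (B - c).toNat = (c - B).natAbs / 2 + (A - c).natAbs / 2 by grind]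
  ring

theorem scal3 (hs : s * s = 1) (A B a : ℤ) (h1 : |a| ≤ B) (h2 : B ≤ A) (e1 : Even (A - B))
    (e2 : Even (B - a)) :
    KK q s A B - sg s a * q ^ ((B - |a|).natAbs / 2) * KK q s A a
      = q ^ ((A - B).natAbs / 2) * (1 - q ^ (B - |a|).toNat) := by
  have e2' : Even (B - |a|) := by rcases abs_choice a with h | h <;> rw [h] <;> grind
  rw [mul_right_comm, ← KK_abs_right q s hs]
  have h0 := abs_nonneg a
  generalize |a| = c at *
  unfold KK
  rw [hh_even q e1, hh_even q (show Even (A + B) by grind), hh_even q (show Even (A - c) by grind),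
    hh_even q (show Even (A + c) by grind), add_mul, mul_assoc, ← pow_add, ← pow_add, mul_sub,
    ← pow_add]
  rw [show (A + c).natAbs / 2 + (B - c).natAbs / 2 = (A + B).natAbs / 2 by grind,
    show (A - B).natAbs / 2 + (B - c).toNat = (A - c).natAbs / 2 + (B - c).natAbs / 2 by grind]
  ring

end

def Cham {n : ℕ} (a : Fin (n + 1) → ℤ) : Prop :=
  StrictMono (fun i => |a i|) ∧ ∀ i, i ≠ 0 → 0 ≤ a i

section
variable {R : Type*} [CommRing R] (q s : R)

theorem det_last_row {n : ℕ} (M : Matrix (Fin (n + 1)) (Fin (n + 1)) R)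
    (h : ∀ j : Fin n, M (Fin.last n) j.castSucc = 0) :
    M.det = M (Fin.last n) (Fin.last n) * (M.submatrix Fin.castSucc Fin.castSucc).det := by
  rw [Matrix.det_succ_row M (Fin.last n), Fin.sum_univ_castSucc]
  rw [Finset.sum_eq_zero]
  · simp [← two_mul]
  · intro j _
    simp [h j]

theorem DD_comm {n : ℕ} (a b : Fin n → ℤ) : DD q s a b = DD q s b a := by
  unfold DD
  rw [← Matrix.det_transpose]
  congr 1
  ext i j
  simp [KK_comm q s (b i)]

theorem DD_step_row {n : ℕ} (a b : Fin (n + 2) → ℤ) (c x : R)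
    (h : ∀ j : Fin (n + 1), KK q s (a (Fin.last _)) (b j.castSucc)
      = c * KK q s (a (Fin.last n).castSucc) (b j.castSucc))
    (hx : KK q s (a (Fin.last _)) (b (Fin.last _))
      - c * KK q s (a (Fin.last n).castSucc) (b (Fin.last _)) = x) :
    DD q s a b = x * DD q s (fun i => a i.castSucc) (fun i => b i.castSucc) := by
  unfold DD
  have hne : Fin.last (n + 1) ≠ (Fin.last n).castSucc := (Fin.castSucc_lt_last _).ne'
  rw [← Matrix.det_updateRow_add_smul_self _ hne (-c), det_last_row]
  · congr 1
    · rw [← hx]; simp; ring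
    · congr 1
      ext i j
      simp [Matrix.updateRow_apply, (Fin.castSucc_lt_last i).ne]
  · intro j
    simp [h j]

theorem DD_step_aux (hs : s * s = 1) {n : ℕ} (a b : Fin (n + 2) → ℤ) (ha : Cham a) (hb : Cham b)
    (he : ∀ i j, Even (a i - b j)) (hab : b (Fin.last _) ≤ a (Fin.last _)) :
    DD q s a b = q ^ ((a (Fin.last _) - b (Fin.last _)).natAbs / 2) *
      (1 - q ^ (min (a (Fin.last _)) (b (Fin.last _)) -
        max |a (Fin.last n).castSucc| |b (Fin.last n).castSucc|).toNat) *
      DD q s (fun i => a i.castSucc) (fun i => b i.castSucc) := by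
  have hlt : (Fin.last n).castSucc < Fin.last (n + 1) := Fin.castSucc_lt_last _
  have ea : ∀ i j, Even (a i - a j) := fun i j => by have := he i 0; have := he j 0; grind
  have eb : ∀ i j, Even (b i - b j) := fun i j => by have := he 0 i; have := he 0 j; grind
  have eab : ∀ i j, Even (b i - a j) := fun i j => by have := he j i; grind
  have hA := ha.1 hlt
  have hB := hb.1 hlt
  have hAn : 0 ≤ a (Fin.last _) := ha.2 _ (Fin.last_pos).ne'
  have hBn : 0 ≤ b (Fin.last _) := hb.2 _ (Fin.last_pos).ne'
  simp only [abs_of_nonneg hAn, abs_of_nonneg hBn] at hA hB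
  rw [min_eq_right hab]
  have hb' : ∀ j : Fin (n+1), |b j.castSucc| ≤ |b (Fin.last n).castSucc| := fun j =>
    hb.1.monotone (by simpa using Fin.le_last j)
  have ha' : ∀ j : Fin (n+1), |a j.castSucc| ≤ |a (Fin.last n).castSucc| := fun j =>
    ha.1.monotone (by simpa using Fin.le_last j)
  by_cases hc : |b (Fin.last n).castSucc| ≤ |a (Fin.last n).castSucc|
  · rw [max_eq_left hc]
    apply DD_step_row q s a b (sg s (a (Fin.last n).castSucc) *
      q ^ ((a (Fin.last _) - |a (Fin.last n).castSucc|).natAbs / 2))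
    · intro j
      exact scal1 q s hs _ _ _ ((hb' j).trans hc) hA.le (ea _ _) (he _ _)
    · by_cases hd : |a (Fin.last n).castSucc| ≤ b (Fin.last _)
      · exact scal2 q s hs _ _ _ hd hab (he _ _) (eab _ _)
      · rw [← scal1 q s hs _ _ _ (by rw [abs_of_nonneg hBn]; omega) hA.le (ea _ _) (he _ _)]
        rw [show (b (Fin.last (n+1)) - |a (Fin.last n).castSucc|).toNat = 0 by omega]
        simp
  · rw [max_eq_right (by omega), DD_comm, DD_comm q s (fun i => a i.castSucc)]
    apply DD_step_row q s b a (sg s (b (Fin.last n).castSucc) *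
      q ^ ((b (Fin.last _) - |b (Fin.last n).castSucc|).natAbs / 2))
    · intro j
      exact scal1 q s hs _ _ _ ((ha' j).trans (by omega)) hB.le (eb _ _) (eab _ _)
    · rw [KK_comm, KK_comm q s _ (a (Fin.last (n+1)))]
      exact scal3 q s hs _ _ _ hB.le hab (he _ _) (eb _ _)

theorem DD_step (hs : s * s = 1) {n : ℕ} (a b : Fin (n + 2) → ℤ) (ha : Cham a) (hb : Cham b)
    (he : ∀ i j, Even (a i - b j)) :
    DD q s a b = q ^ ((a (Fin.last _) - b (Fin.last _)).natAbs / 2) *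
      (1 - q ^ (min (a (Fin.last _)) (b (Fin.last _)) -
        max |a (Fin.last n).castSucc| |b (Fin.last n).castSucc|).toNat) *
      DD q s (fun i => a i.castSucc) (fun i => b i.castSucc) := by
  rcases le_total (b (Fin.last _)) (a (Fin.last _)) with h | h
  · exact DD_step_aux q s hs a b ha hb he h
  · rw [DD_comm, DD_step_aux q s hs b a hb ha (fun i j => by have := he j i; grind) h, min_comm,
      max_comm, DD_comm]
    rw [show (b (Fin.last (n+1)) - a (Fin.last _)).natAbs = (a (Fin.last (n+1)) - b (Fin.last _)).natAbs by omega]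

theorem DD_formula (hs : s * s = 1) {n : ℕ} (a b : Fin (n + 1) → ℤ) (ha : Cham a) (hb : Cham b)
    (he : ∀ i j, Even (a i - b j)) :
    DD q s a b = KK q s (a 0) (b 0) * ∏ i : Fin n, (q ^ ((a i.succ - b i.succ).natAbs / 2) *
      (1 - q ^ (min (a i.succ) (b i.succ) - max |a i.castSucc| |b i.castSucc|).toNat)) := by
  induction n with
  | zero => simp [DD]
  | succ n ih =>
    rw [DD_step q s hs a b ha hb he, ih (fun i => a i.castSucc) (fun i => b i.castSucc),
      Fin.prod_univ_castSucc]
    · simp only [Fin.succ_castSucc, Fin.succ_last, Fin.castSucc_zero]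
      ring
    · exact ⟨fun i j h => ha.1 (by simpa using h), fun i hi => ha.2 _ (by simpa using hi)⟩
    · exact ⟨fun i j h => hb.1 (by simpa using h), fun i hi => hb.2 _ (by simpa using hi)⟩
    · exact fun i j => he _ _

theorem DD_sum {n : ℕ} (a b : Fin (n + 1) → ℤ) (ha : Cham a) (hb : Cham b)
    (he : ∀ i j, Even (a i - b j)) :
    DD q 1 a b + DD q (-1) a b = 2 * (q ^ ((a 0 - b 0).natAbs / 2) *
      ∏ i : Fin n, (q ^ ((a i.succ - b i.succ).natAbs / 2) *
      (1 - q ^ (min (a i.succ) (b i.succ) - max |a i.castSucc| |b i.castSucc|).toNat))) := by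
  rw [DD_formula q 1 (by ring) a b ha hb he, DD_formula q (-1) (by ring) a b ha hb he]
  unfold KK
  rw [hh_even q (he 0 0)]
  ring

theorem DD_zero {n : ℕ} (a b : Fin n → ℤ) (i : Fin n) (h : ∀ j, ¬ Even (a i - b j)) :
    DD q s a b = 0 := by
  unfold DD
  apply Matrix.det_eq_zero_of_row_eq_zero i
  intro j
  have h2 : ¬ Even (a i + b j) := by have := h j; grind
  simp [KK, hh, h j, h2]

theorem DD_perm {n : ℕ} (a b : Fin n → ℤ) (σ : Equiv.Perm (Fin n)) :
    DD q s (fun i => a (σ i)) b = ((Equiv.Perm.sign σ : ℤ) : R) * DD q s a b := by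
  unfold DD
  rw [← Matrix.det_permute]
  rfl

theorem DD_flip1 {n : ℕ} (a b : Fin n → ℤ) (ε : Fin n → ℤˣ) :
    DD q 1 (fun i => (ε i : ℤ) * a i) b = DD q 1 a b := by
  unfold DD
  congr 1
  ext i j
  rcases Int.units_eq_one_or (ε i) with h | h <;> simp [h, KK_neg]

theorem DD_flip2 {n : ℕ} (a b : Fin n → ℤ) (ε : Fin n → ℤˣ) (hε : ∏ i, ε i = 1) :
    DD q (-1) (fun i => (ε i : ℤ) * a i) b = DD q (-1) a b := by
  unfold DD
  have := Matrix.det_mul_column (fun i => ((ε i : ℤ) : R)) (Matrix.of fun i j => KK q (-1) (a i) (b j))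
  have h1 : ∏ i, ((ε i : ℤ) : R) = 1 := by
    rw [← Int.cast_prod, ← Units.coe_prod, hε]; simp
  rw [h1, one_mul] at this
  rw [← this]
  congr 1
  ext i j
  rcases Int.units_eq_one_or (ε i) with h | h <;> simp [h, KK_neg]

end

/-- Signed permutations acting on integer vectors. -/
def actZ {n : ℕ} (σ : Equiv.Perm (Fin n)) (ε : Fin n → Bool) (b : Fin n → ℤ) : Fin n → ℤ :=
  fun i => (if ε i then -1 else 1) * b (σ⁻¹ i)

theorem xpow_wAct {n : ℕ} (σ : Equiv.Perm (Fin n)) (ε : Fin n → Bool) (β : Fin n → ℚ)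
    (b : Fin n → ℤ) (hb : ∀ i, 2 * β i = b i) :
    xpow (wAct σ ε β) = AddMonoidAlgebra.single (actZ σ ε b) 1 := by
  unfold xpow
  congr 1
  funext i
  unfold wAct actZ
  rw [mul_left_comm, hb]
  split_ifs
  · rw [Int.floor_eq_iff]; push_cast; constructor <;> linarith
  · rw [Int.floor_eq_iff]; push_cast; constructor <;> linarith

theorem coeff_altD_mul {n : ℕ} (β : Fin n → ℚ) (b : Fin n → ℤ) (hb : ∀ i, 2 * β i = b i)
    (H : AddMonoidAlgebra ℤ (Fin n → ℤ)) (μ : Fin n → ℤ) :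
    (altD β * H).coeff μ = ∑ σ : Equiv.Perm (Fin n), ∑ ε : Fin n → Bool,
      if (∏ i, (if ε i then (-1 : ℤ) else 1)) = 1 then
        wDet σ ε * H.coeff (μ - actZ σ ε b) else 0 := by
  unfold altD
  simp only [Finset.sum_mul, AddMonoidAlgebra.coeff_sum, Finsupp.finsetSum_apply]
  refine Finset.sum_congr rfl fun σ _ => Finset.sum_congr rfl fun ε _ => ?_
  split_ifs
  · rw [xpow_wAct σ ε β b hb, smul_mul_assoc, AddMonoidAlgebra.coeff_smul, Finsupp.smul_apply,
      AddMonoidAlgebra.coeff_single_mul_apply, one_mul, smul_eq_mul, neg_add_eq_sub]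
  · simp

theorem two_alt {R : Type*} [CommRing R] {n : ℕ} (q : R) (μ b : Fin n → ℤ) :
    2 * (∑ σ : Equiv.Perm (Fin n), ∑ ε : Fin n → Bool,
      if (∏ i, (if ε i then (-1 : ℤ) else 1)) = 1 then
        (wDet σ ε : R) * ∏ i, hh q ((μ - actZ σ ε b) i) else 0)
    = DD q 1 μ b + DD q (-1) μ b := by
  have key : ∀ s : R, DD q s μ b = ∑ σ : Equiv.Perm (Fin n), ∑ ε : Fin n → Bool,
      ((Equiv.Perm.sign σ : ℤ) : R) * ((∏ i, if ε i then s else 1) *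
        ∏ i, hh q ((μ - actZ σ ε b) i)) := by
    intro s
    unfold DD
    rw [← Matrix.det_transpose, Matrix.det_apply', ← Equiv.sum_comp (Equiv.inv (Equiv.Perm (Fin n)))]
    refine Finset.sum_congr rfl fun σ _ => ?_
    simp only [Equiv.inv_apply, Equiv.Perm.sign_inv, Matrix.transpose_apply, Matrix.of_apply]
    rw [← Finset.mul_sum]
    congr 1
    have := Finset.prod_univ_sum (fun _ : Fin n => (Finset.univ : Finset Bool))
      (fun i e => (if e then s else 1) * hh q (μ i - (if e then -1 else 1) * b (σ⁻¹ i)))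
    rw [Fintype.piFinset_univ] at this
    simp only [Finset.prod_mul_distrib] at this
    rw [show (∑ ε : Fin n → Bool, ((∏ i, if ε i then s else 1) *
        ∏ i, hh q ((μ - actZ σ ε b) i))) = _ from this.symm]
    refine Finset.prod_congr rfl fun i _ => ?_
    simp [KK, add_comm]
  rw [key, key, ← Finset.sum_add_distrib, Finset.mul_sum]
  refine Finset.sum_congr rfl fun σ _ => ?_
  rw [← Finset.sum_add_distrib, Finset.mul_sum]
  refine Finset.sum_congr rfl fun ε _ => ?_
  have h2 : (∏ i, (if ε i then (-1 : R) else 1)) = ((∏ i, (if ε i then (-1 : ℤ) else 1) : ℤ) : R) := by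
    push_cast; rfl
  have h3 : (∏ i, (if ε i then (-1 : ℤ) else 1)) = 1 ∨ (∏ i, (if ε i then (-1 : ℤ) else 1)) = -1 := by
    apply Finset.prod_induction _ (fun x : ℤ => x = 1 ∨ x = -1)
    · rintro a b (rfl | rfl) (rfl | rfl) <;> simp
    · simp
    · intro i _; split_ifs <;> simp
  rw [h2]
  unfold wDet
  rcases h3 with h | h
  · simp [h]; ring
  · simp [h]

/-- Anti-invariance under the Weyl group of type D. -/
def AntiInv {n : ℕ} (F : (Fin n → ℤ) → ℤ) : Prop :=
  (∀ (σ : Equiv.Perm (Fin n)) (μ : Fin n → ℤ),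
    F (fun i => μ (σ i)) = (Equiv.Perm.sign σ : ℤ) * F μ) ∧
  (∀ (ε : Fin n → ℤˣ) (μ : Fin n → ℤ), ∏ i, ε i = 1 → F (fun i => (ε i : ℤ) * μ i) = F μ)

theorem AntiInv.zero_of_cham {n : ℕ} {F : (Fin (n + 1) → ℤ) → ℤ} (hF : AntiInv F)
    (h0 : ∀ μ, Cham μ → F μ = 0) (μ : Fin (n + 1) → ℤ) : F μ = 0 := by
  by_cases hinj : Function.Injective (fun i => |μ i|)
  · set σ := Tuple.sort (fun i => |μ i|) with hσ
    have hm : StrictMono (fun i => |μ (σ i)|) :=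
      (Tuple.monotone_sort (fun i => |μ i|)).strictMono_of_injective (hinj.comp σ.injective)
    have h1 := hF.1 σ μ
    set ν := fun i => μ (σ i) with hν
    have hpos : ∀ i, i ≠ 0 → ν i ≠ 0 := by
      intro i hi h
      have : |ν 0| < |ν i| := hm (Fin.pos_iff_ne_zero.mpr hi)
      rw [h] at this
      simp at this
      have := abs_nonneg (ν 0)
      omega
    let e : Fin n → ℤˣ := fun i => if 0 ≤ ν i.succ then 1 else -1
    let ε : Fin (n + 1) → ℤˣ := Fin.cons (∏ i, e i) e
    have hε : ∏ i, ε i = 1 := by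
      rw [Fin.prod_univ_succ]
      simp only [ε, Fin.cons_zero, Fin.cons_succ]
      exact Int.units_mul_self _
    have h2 := hF.2 ε ν hε
    have hc : Cham (fun i => (ε i : ℤ) * ν i) := by
      constructor
      · intro i j hij
        have := hm hij
        have hu : ∀ k, |((ε k : ℤˣ) : ℤ)| = 1 := fun k => by
          rcases Int.units_eq_one_or (ε k) with h | h <;> simp [h]
        simpa only [abs_mul, hu, one_mul] using this
      · intro i hi
        obtain ⟨j, rfl⟩ := Fin.exists_succ_eq.mpr hi
        simp only [ε, Fin.cons_succ, e]
        split_ifs with h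
        · simpa using h
        · simp; omega
    rw [h0 _ hc] at h2
    rw [← h2] at h1
    rcases Int.units_eq_one_or (Equiv.Perm.sign σ) with h | h <;> rw [h] at h1 <;> simp at h1 <;> omega
  · obtain ⟨i, j, hij, hne⟩ : ∃ i j, |μ i| = |μ j| ∧ i ≠ j := by
      simpa [Function.Injective] using hinj
    rcases abs_eq_abs.mp hij with h | h
    · have h1 := hF.1 (Equiv.swap i j) μ
      have h2 : (fun k => μ (Equiv.swap i j k)) = μ := by
        funext k
        rw [Equiv.swap_apply_def]
        split_ifs with ha hb
        · rw [ha, h]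
        · rw [hb, h]
        · rfl
      rw [h2, Equiv.Perm.sign_swap hne] at h1
      simp at h1
      omega
    · have h1 := hF.1 (Equiv.swap i j) μ
      have h2 := hF.2 (fun k => if k = i ∨ k = j then -1 else 1) (fun k => μ (Equiv.swap i j k)) (by
        rw [Finset.prod_ite, Finset.prod_const_one, mul_one, Finset.prod_const]
        rw [show (Finset.univ.filter fun k => k = i ∨ k = j) = {i, j} by ext; simp]
        rw [Finset.card_pair hne]; simp)
      have h3 : (fun k => (((if k = i ∨ k = j then -1 else 1 : ℤˣ)) : ℤ) * μ (Equiv.swap i j k)) = μ := by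
        funext k
        rw [Equiv.swap_apply_def]
        by_cases ha : k = i
        · simp [ha, h]
        · by_cases hb : k = j
          · simp [hb, h, hne.symm]
          · simp [ha, hb]
      rw [h3] at h2
      rw [← h2, Equiv.Perm.sign_swap hne] at h1
      simp at h1
      omega

theorem AntiInv.ext {n : ℕ} {F G : (Fin (n + 1) → ℤ) → ℤ} (hF : AntiInv F) (hG : AntiInv G)
    (h0 : ∀ μ, Cham μ → F μ = G μ) (μ : Fin (n + 1) → ℤ) : F μ = G μ := by
  have : AntiInv (fun μ => F μ - G μ) :=
    ⟨fun σ μ => by beta_reduce; rw [hF.1, hG.1]; ring, fun ε μ h => by beta_reduce; rw [hF.2 ε μ h, hG.2 ε μ h]⟩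
  have := this.zero_of_cham (fun μ h => by rw [h0 μ h, sub_self]) μ
  exact sub_eq_zero.mp this

theorem AntiInv.sum {n : ℕ} {ι : Type*} (S : Finset ι) (c : ι → ℤ) (F : ι → (Fin n → ℤ) → ℤ)
    (hF : ∀ l ∈ S, AntiInv (F l)) : AntiInv (fun μ => ∑ l ∈ S, c l * F l μ) := by
  constructor
  · intro σ μ
    rw [Finset.mul_sum]
    refine Finset.sum_congr rfl fun l hl => ?_
    rw [(hF l hl).1]; ring
  · intro ε μ h
    refine Finset.sum_congr rfl fun l hl => ?_
    rw [(hF l hl).2 ε μ h]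

open Classical in
noncomputable def phi (P : ℕ → ℕ → Prop) : PowerSeries ℤ :=
  PowerSeries.mk fun m => (((Finset.HasAntidiagonal.antidiagonal m).filter fun p => P p.1 p.2).card : ℤ)

theorem count_gf {n : ℕ} (P : Fin n → ℕ → ℕ → Prop) (r : ℕ) :
    (Nat.card {t : (Fin n → ℕ) × (Fin n → ℕ) // (∀ i, P i (t.1 i) (t.2 i)) ∧
      ∑ i, (t.1 i + t.2 i) = r} : ℤ) = PowerSeries.coeff r (∏ i, phi (P i)) := by
  classical
  rw [PowerSeries.coeff_prod]
  simp only [phi, PowerSeries.coeff_mk]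
  have h1 : ∀ l : Fin n →₀ ℕ, (∏ i, ((((Finset.HasAntidiagonal.antidiagonal (l i)).filter
      fun p => P i p.1 p.2).card : ℕ) : ℤ)) = ((Fintype.piFinset fun i => (Finset.HasAntidiagonal.antidiagonal (l i)).filter
      fun p => P i p.1 p.2).card : ℤ) := by
    intro l
    rw [Fintype.card_piFinset]; push_cast; rfl
  simp only [h1]
  rw [← Nat.cast_sum, ← Finset.card_biUnion, Nat.cast_inj]
  · rw [← Nat.card_eq_finsetCard]
    refine Nat.card_congr ⟨fun t => ⟨fun i => (t.1.1 i, t.1.2 i), ?_⟩,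
      fun x => ⟨(fun i => (x.1 i).1, fun i => (x.1 i).2), ?_⟩, fun t => rfl, fun t => rfl⟩
    · rw [Finset.mem_biUnion]
      refine ⟨Finsupp.equivFunOnFinite.symm (fun i => t.1.1 i + t.1.2 i), ?_, ?_⟩
      · simp [Finset.mem_finsuppAntidiag, t.2.2]
      · simp [t.2.1]
    · obtain ⟨x, hx⟩ := x
      rw [Finset.mem_biUnion] at hx
      obtain ⟨l, hl, hx⟩ := hx
      simp only [Fintype.mem_piFinset, Finset.mem_filter, Finset.HasAntidiagonal.mem_antidiagonal] at hx
      simp only [Finset.mem_finsuppAntidiag] at hl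
      refine ⟨fun i => (hx i).2, ?_⟩
      simp only [fun i => (hx i).1]
      exact hl.1
  · intro l _ l' _ hll
    rw [Function.onFun, Finset.disjoint_left]
    intro x hx hx'
    simp only [Fintype.mem_piFinset, Finset.mem_filter, Finset.HasAntidiagonal.mem_antidiagonal] at hx hx'
    apply hll
    ext i
    rw [← (hx i).1, ← (hx' i).1]

theorem card_aux (v : ℤ) (m : ℕ) (Q : ℕ → Prop) [DecidablePred Q]
    [DecidablePred fun p : ℕ × ℕ => ((p.2 : ℤ) - p.1 = v ∧ Q (min p.1 p.2))] :
    ((Finset.HasAntidiagonal.antidiagonal m).filter fun p => ((p.2 : ℤ) - p.1 = v ∧ Q (min p.1 p.2))).card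
      = if v.natAbs ≤ m ∧ (m - v.natAbs) % 2 = 0 ∧ Q ((m - v.natAbs) / 2) then 1 else 0 := by
  split_ifs with h
  · rw [Finset.card_eq_one]
    refine ⟨((m - v.natAbs) / 2 + (-v).toNat, (m - v.natAbs) / 2 + v.toNat), ?_⟩
    ext ⟨x, y⟩
    simp only [Finset.mem_filter, Finset.HasAntidiagonal.mem_antidiagonal, Finset.mem_singleton, Prod.mk.injEq]
    constructor
    · rintro ⟨h1, h2, _⟩; omega
    · rintro ⟨rfl, rfl⟩
      refine ⟨by omega, by omega, ?_⟩
      convert h.2.2 using 1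
      omega
  · rw [Finset.card_eq_zero, Finset.filter_eq_empty_iff]
    rintro ⟨x, y⟩ hp ⟨h1, h2⟩
    simp only [Finset.HasAntidiagonal.mem_antidiagonal] at hp h1 h2
    apply h
    refine ⟨by omega, by omega, ?_⟩
    convert h2 using 1
    omega

theorem phi_zero (v : ℤ) : phi (fun k k' => ((k' : ℤ) - k = v ∧ min k k' = 0))
    = PowerSeries.X ^ v.natAbs := by
  classical
  ext m
  rw [PowerSeries.coeff_X_pow]
  simp only [phi, PowerSeries.coeff_mk]
  have := card_aux v m (fun c => c = 0)
  rw [show ((_ : ℕ) : ℤ) = _ from congrArg (Nat.cast) this]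
  push_cast
  congr 1
  simp only [eq_iff_iff]
  omega

theorem phi_free (v : ℤ) : (1 - PowerSeries.X ^ 2) * phi (fun k k' => ((k' : ℤ) - k = v))
    = PowerSeries.X ^ v.natAbs := by
  classical
  have : (fun k k' : ℕ => ((k' : ℤ) - k = v)) = (fun k k' : ℕ => ((k' : ℤ) - k = v ∧ (fun _ => True) (min k k'))) := by
    simp
  rw [this]
  ext m
  rw [sub_mul, one_mul, map_sub, PowerSeries.coeff_X_pow_mul', PowerSeries.coeff_X_pow]
  simp only [phi, PowerSeries.coeff_mk]
  rw [card_aux v m (fun _ => True), card_aux v (m - 2) (fun _ => True)]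
  simp only [and_true]
  split_ifs <;> first | rfl | (exfalso; omega) | simp

theorem phi_bdd (v : ℤ) (L : ℕ) (hL : Even L) : (1 - PowerSeries.X ^ 2) *
    phi (fun k k' => ((k' : ℤ) - k = v ∧ 2 * min k k' < L))
    = PowerSeries.X ^ v.natAbs * (1 - PowerSeries.X ^ L) := by
  classical
  have hL' : L % 2 = 0 := Nat.even_iff.mp hL
  ext m
  rw [sub_mul, one_mul, map_sub, PowerSeries.coeff_X_pow_mul', mul_sub, mul_one, map_sub, ← pow_add,
    PowerSeries.coeff_X_pow, PowerSeries.coeff_X_pow]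
  simp only [phi, PowerSeries.coeff_mk]
  rw [card_aux v m (fun c => 2 * c < L), card_aux v (m - 2) (fun c => 2 * c < L)]
  split_ifs <;> first | rfl | (exfalso; omega) | simp

theorem phi_zero' (v : ℤ) : phi (fun k k' => (2 * ((k' : ℤ) - k) = v ∧ min k k' = 0))
    = hh PowerSeries.X v := by
  by_cases h : Even v
  · obtain ⟨w, rfl⟩ := h
    rw [hh_even _ (by simp), show (w + w).natAbs / 2 = w.natAbs by omega, ← phi_zero]
    congr 1
    funext k k'
    simp only [eq_iff_iff]
    omega
  · rw [hh, if_neg h]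
    ext m
    simp only [phi, PowerSeries.coeff_mk, map_zero, Nat.cast_eq_zero, Finset.card_eq_zero,
      Finset.filter_eq_empty_iff]
    rintro p _ ⟨h1, _⟩
    exact h ⟨(p.2 : ℤ) - p.1, by omega⟩

theorem phi_free' (v : ℤ) : (1 - PowerSeries.X ^ 2) * phi (fun k k' => 2 * ((k' : ℤ) - k) = v)
    = hh PowerSeries.X v := by
  by_cases h : Even v
  · obtain ⟨w, rfl⟩ := h
    rw [hh_even _ (by simp), show (w + w).natAbs / 2 = w.natAbs by omega, ← phi_free]
    congr 2
    funext k k'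
    simp only [eq_iff_iff]
    omega
  · rw [hh, if_neg h]
    convert mul_zero _
    ext m
    simp only [phi, PowerSeries.coeff_mk, map_zero, Nat.cast_eq_zero, Finset.card_eq_zero,
      Finset.filter_eq_empty_iff]
    intro p _ h1
    exact h ⟨(p.2 : ℤ) - p.1, by omega⟩

/-- The character of `V(rΛ)`. -/
noncomputable def Hr (k r : ℕ) : AddMonoidAlgebra ℤ (Fin (k + 1) → ℤ) :=
  ∑ t : (Fin (k + 1) → Fin (r + 1)) × (Fin (k + 1) → Fin (r + 1)),
        if min (t.1 0 : ℕ) (t.2 0 : ℕ) = 0 ∧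
            ∑ i, ((t.1 i : ℕ) + (t.2 i : ℕ)) = r then
          xpow (fun i => ((t.2 i : ℕ) : ℚ) - ((t.1 i : ℕ) : ℚ))
        else 0

def Pfree {k : ℕ} (v : Fin (k + 1) → ℤ) : Fin (k + 1) → ℕ → ℕ → Prop :=
  Fin.cons (fun k k' => (2 * ((k' : ℤ) - k) = v 0 ∧ min k k' = 0))
    (fun i k k' => (2 * ((k' : ℤ) - k) = v i.succ))

theorem xpow_diff {n : ℕ} (x y : Fin n → ℕ) :
    xpow (fun i => (y i : ℚ) - (x i : ℚ)) =
      AddMonoidAlgebra.single (fun i => 2 * ((y i : ℤ) - x i)) 1 := by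
  unfold xpow
  congr 1
  funext i
  rw [Int.floor_eq_iff]; push_cast; constructor <;> linarith

theorem Hr_coeff (k r : ℕ) (v : Fin (k + 1) → ℤ) :
    (Hr k r).coeff v = (Nat.card {t : (Fin (k + 1) → ℕ) × (Fin (k + 1) → ℕ) //
      (∀ i, Pfree v i (t.1 i) (t.2 i)) ∧ ∑ i, (t.1 i + t.2 i) = r} : ℤ) := by
  classical
  unfold Hr
  rw [AddMonoidAlgebra.coeff_sum, Finsupp.finsetSum_apply]
  have h1 : ∀ t : (Fin (k + 1) → Fin (r + 1)) × (Fin (k + 1) → Fin (r + 1)),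
      (if min (t.1 0 : ℕ) (t.2 0 : ℕ) = 0 ∧ ∑ i, ((t.1 i : ℕ) + (t.2 i : ℕ)) = r then
          xpow (fun i => ((t.2 i : ℕ) : ℚ) - ((t.1 i : ℕ) : ℚ)) else 0).coeff v
      = if ((∀ i, Pfree v i (t.1 i) (t.2 i)) ∧ ∑ i, ((t.1 i : ℕ) + (t.2 i : ℕ)) = r) then (1 : ℤ)
        else 0 := by
    intro t
    rw [xpow_diff (fun i => (t.1 i : ℕ)) (fun i => (t.2 i : ℕ))]
    have h2 : (∀ i, Pfree v i (t.1 i) (t.2 i)) ↔ (min (t.1 0 : ℕ) (t.2 0 : ℕ) = 0 ∧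
        (fun i => 2 * (((t.2 i : ℕ) : ℤ) - (t.1 i : ℕ))) = v) := by
      rw [funext_iff, Fin.forall_fin_succ, Fin.forall_fin_succ (P := fun i => 2 * (((t.2 i : ℕ) : ℤ) - (t.1 i : ℕ)) = v i)]
      simp only [Pfree, Fin.cons_zero, Fin.cons_succ]
      tauto
    by_cases hc : min (t.1 0 : ℕ) (t.2 0 : ℕ) = 0 ∧ ∑ i, ((t.1 i : ℕ) + (t.2 i : ℕ)) = r
    · rw [if_pos hc, AddMonoidAlgebra.coeff_single, Finsupp.single_apply]
      congr 1
      rw [h2, eq_iff_iff]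
      tauto
    · rw [if_neg hc, if_neg (by rw [h2]; tauto)]
      simp
  rw [Finset.sum_congr rfl (fun t _ => h1 t), Finset.sum_boole, Nat.cast_inj,
    ← Nat.card_eq_finsetCard]
  have hle : ∀ t : {t : (Fin (k + 1) → ℕ) × (Fin (k + 1) → ℕ) //
      (∀ i, Pfree v i (t.1 i) (t.2 i)) ∧ ∑ i, (t.1 i + t.2 i) = r}, ∀ i,
      t.1.1 i + t.1.2 i < r + 1 := by
    intro t i
    have := Finset.single_le_sum (f := fun i => t.1.1 i + t.1.2 i) (fun _ _ => Nat.zero_le _)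
      (Finset.mem_univ i)
    have h3 := t.2.2
    have h4 : t.1.1 i + t.1.2 i ≤ ∑ i, (t.1.1 i + t.1.2 i) := this
    omega
  refine Nat.card_congr ⟨fun t => ⟨(fun i => (t.1.1 i : ℕ), fun i => (t.1.2 i : ℕ)), ?_⟩,
    fun t => ⟨(fun i => ⟨t.1.1 i, by have := hle t i; omega⟩,
      fun i => ⟨t.1.2 i, by have := hle t i; omega⟩), ?_⟩, fun t => rfl, fun t => rfl⟩
  · exact (Finset.mem_filter.mp t.2).2
  · exact Finset.mem_filter.mpr ⟨Finset.mem_univ _, t.2⟩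

theorem Hr_gf (k : ℕ) (v : Fin (k + 1) → ℤ) :
    (1 - PowerSeries.X ^ 2) ^ k * PowerSeries.mk (fun r => (Hr k r).coeff v)
      = ∏ i, hh (PowerSeries.X : PowerSeries ℤ) (v i) := by
  have : PowerSeries.mk (fun r => (Hr k r).coeff v) = ∏ i, phi (Pfree v i) := by
    ext r
    rw [PowerSeries.coeff_mk, Hr_coeff, count_gf]
  rw [this, Fin.prod_univ_succ, Fin.prod_univ_succ]
  simp only [Pfree, Fin.cons_zero, Fin.cons_succ]
  rw [phi_zero', mul_left_comm]
  congr 1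
  rw [show (1 - PowerSeries.X ^ 2 : PowerSeries ℤ) ^ k = ∏ _i : Fin k, (1 - PowerSeries.X ^ 2) by simp,
    ← Finset.prod_mul_distrib]
  exact Finset.prod_congr rfl fun i _ => phi_free' _

theorem LHS_gf {k : ℕ} (β : Fin (k + 1) → ℚ) (b : Fin (k + 1) → ℤ) (hb : ∀ i, 2 * β i = b i)
    (μ : Fin (k + 1) → ℤ) :
    2 * ((1 - PowerSeries.X ^ 2) ^ k * PowerSeries.mk (fun r => (altD β * Hr k r).coeff μ))
      = DD (PowerSeries.X : PowerSeries ℤ) 1 μ b + DD PowerSeries.X (-1) μ b := by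
  rw [← two_alt]
  congr 1
  have : PowerSeries.mk (fun r => (altD β * Hr k r).coeff μ) =
      ∑ σ : Equiv.Perm (Fin (k + 1)), ∑ ε : Fin (k + 1) → Bool,
      if (∏ i, (if ε i then (-1 : ℤ) else 1)) = 1 then
        (wDet σ ε : PowerSeries ℤ) * PowerSeries.mk (fun r => (Hr k r).coeff (μ - actZ σ ε b))
      else 0 := by
    ext r
    rw [PowerSeries.coeff_mk, coeff_altD_mul β b hb]
    simp only [map_sum]
    refine Finset.sum_congr rfl fun σ _ => Finset.sum_congr rfl fun ε _ => ?_
    split_ifs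
    · rw [show ((wDet σ ε : ℤ) : PowerSeries ℤ) = PowerSeries.C (wDet σ ε) by simp,
        PowerSeries.coeff_C_mul, PowerSeries.coeff_mk]
    · simp
  rw [this]
  simp only [Finset.mul_sum]
  refine Finset.sum_congr rfl fun σ _ => Finset.sum_congr rfl fun ε _ => ?_
  split_ifs
  · rw [mul_left_comm, Hr_gf]
  · simp

theorem one_sub_ne (k : ℕ) : (2 * (1 - PowerSeries.X ^ 2) ^ k : PowerSeries ℤ) ≠ 0 := by
  have h2 : (2 : PowerSeries ℤ) ≠ 0 := by
    intro h
    have := congrArg PowerSeries.constantCoeff h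
    rw [map_ofNat, map_zero] at this
    omega
  refine mul_ne_zero h2 (pow_ne_zero _ ?_)
  intro h
  have := congrArg (PowerSeries.coeff 0) h
  simp at this

theorem LHS_anti {k : ℕ} (β : Fin (k + 1) → ℚ) (b : Fin (k + 1) → ℤ) (hb : ∀ i, 2 * β i = b i)
    (r : ℕ) : AntiInv (fun μ => (altD β * Hr k r).coeff μ) := by
  constructor
  · intro σ μ
    have h1 := LHS_gf β b hb μ
    have h2 := LHS_gf β b hb (fun i => μ (σ i))
    rw [DD_perm, DD_perm, ← mul_add, ← h1] at h2
    have h2' : 2 * (1 - PowerSeries.X ^ 2) ^ k *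
        PowerSeries.mk (fun r => (altD β * Hr k r).coeff (fun i => μ (σ i))) =
        2 * (1 - PowerSeries.X ^ 2) ^ k * (((((Equiv.Perm.sign σ : ℤˣ) : ℤ)) : PowerSeries ℤ) *
          PowerSeries.mk (fun r => (altD β * Hr k r).coeff μ)) := by
      rw [mul_assoc, h2]; ring
    have h3 := congrArg (PowerSeries.coeff r) (mul_left_cancel₀ (one_sub_ne k) h2')
    rwa [show ((((Equiv.Perm.sign σ : ℤˣ) : ℤ)) : PowerSeries ℤ) = PowerSeries.C ((Equiv.Perm.sign σ : ℤˣ) : ℤ) by simp,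
      PowerSeries.coeff_C_mul, PowerSeries.coeff_mk, PowerSeries.coeff_mk] at h3
  · intro ε μ hε
    have h1 := LHS_gf β b hb μ
    have h2 := LHS_gf β b hb (fun i => (ε i : ℤ) * μ i)
    rw [DD_flip1, DD_flip2 _ _ _ _ hε, ← h1, ← mul_assoc, ← mul_assoc] at h2
    have h3 := congrArg (PowerSeries.coeff r) (mul_left_cancel₀ (one_sub_ne k) h2)
    rwa [PowerSeries.coeff_mk, PowerSeries.coeff_mk] at h3

theorem alt_two {n : ℕ} (β : Fin n → ℚ) (b : Fin n → ℤ) (hb : ∀ i, 2 * β i = b i)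
    (μ : Fin n → ℤ) : 2 * (altD β).coeff μ = DD (0 : ℤ) 1 μ b + DD (0 : ℤ) (-1) μ b := by
  rw [← two_alt]
  congr 1
  have := coeff_altD_mul β b hb 1 μ
  rw [mul_one] at this
  rw [this]
  refine Finset.sum_congr rfl fun σ _ => Finset.sum_congr rfl fun ε _ => ?_
  split_ifs
  · congr 1
    rw [AddMonoidAlgebra.one_def, AddMonoidAlgebra.coeff_single, Finsupp.single_apply]
    have hh0 : ∀ m : ℤ, hh (0 : ℤ) m = if m = 0 then 1 else 0 := by
      intro m
      unfold hh
      split_ifs with h1 h2 h2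
      · simp [h2]
      · rw [zero_pow]; grind
      · simp [h2] at h1
      · rfl
    split_ifs with h
    · rw [← h]; simp [hh0]
    · obtain ⟨i, hi⟩ : ∃ i, (μ - actZ σ ε b) i ≠ 0 := by
        by_contra hc
        push Not at hc
        exact h (funext fun i => (hc i).symm)
      rw [Finset.prod_eq_zero (Finset.mem_univ i)]
      rw [hh0, if_neg hi]
  · rfl

theorem alt_anti {n : ℕ} (β : Fin n → ℚ) (b : Fin n → ℤ) (hb : ∀ i, 2 * β i = b i) :
    AntiInv (fun μ => (altD β).coeff μ) := by
  constructor
  · intro σ μ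
    have h1 := alt_two β b hb μ
    have h2 := alt_two β b hb (fun i => μ (σ i))
    rw [DD_perm, DD_perm, ← mul_add, ← h1, mul_left_comm] at h2
    exact mul_left_cancel₀ two_ne_zero h2
  · intro ε μ hε
    have h1 := alt_two β b hb μ
    have h2 := alt_two β b hb (fun i => (ε i : ℤ) * μ i)
    rw [DD_flip1, DD_flip2 _ _ _ _ hε, ← h1] at h2
    exact mul_left_cancel₀ two_ne_zero h2

theorem alt_cham {k : ℕ} (β : Fin (k + 1) → ℚ) (b : Fin (k + 1) → ℤ) (hb : ∀ i, 2 * β i = b i)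
    (hc : Cham b) (hp : ∀ i j, Even (b i - b j)) (μ : Fin (k + 1) → ℤ) (hμ : Cham μ) :
    (altD β).coeff μ = if μ = b then 1 else 0 := by
  have h2 := alt_two β b hb μ
  by_cases he : ∀ i j, Even (μ i - b j)
  · rw [DD_sum 0 μ b hμ hc he] at h2
    rw [mul_left_cancel₀ two_ne_zero h2]
    split_ifs with h
    · subst h
      simp only [sub_self, Int.natAbs_zero, Nat.zero_div, pow_zero, one_mul, min_self, max_self]
      apply Finset.prod_eq_one
      intro i _
      have h3 : |μ i.castSucc| < |μ i.succ| := hμ.1 (Fin.castSucc_lt_succ)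
      rw [abs_of_nonneg (hμ.2 i.succ (Fin.succ_ne_zero i))] at h3
      rw [zero_pow (by omega), sub_zero]
    · obtain ⟨i, hi⟩ : ∃ i, μ i ≠ b i := Function.ne_iff.mp h
      have hi' : (0 : ℤ) ^ ((μ i - b i).natAbs / 2) = 0 := by
        have := he i i
        rw [zero_pow]; grind
      revert hi'
      refine Fin.cases ?_ (fun j => ?_) i
      · intro hi'; rw [hi', zero_mul]
      · intro hi'
        rw [Finset.prod_eq_zero (Finset.mem_univ j), mul_zero]
        rw [hi', zero_mul]
  · push Not at he
    obtain ⟨i, j, hij⟩ := he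
    have hz : ∀ j', ¬ Even (μ i - b j') := fun j' => by have := hp j j'; grind
    rw [DD_zero _ _ _ _ i hz, DD_zero _ _ _ _ i hz, add_zero] at h2
    rw [if_neg]
    · omega
    · rintro rfl
      exact hz i (by simp)

theorem dom_int {k : ℕ} (lam : Fin (k + 1) → ℚ) (h : DominantD lam) :
    ∃ b : Fin (k + 1) → ℤ, (∀ i, 2 * (lam + rhoD (k + 1)) i = b i) ∧ Cham b ∧
      ∀ i j, Even (b i - b j) := by
  obtain ⟨h1, h2, h3⟩ := h
  have hex : ∃ b : Fin (k + 1) → ℤ, (∀ i, 2 * (lam + rhoD (k + 1)) i = b i) ∧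
      ∀ i j, Even (b i - b j) := by
    rcases h3 with h3 | h3
    · choose z hz using h3
      refine ⟨fun i => 2 * (z i + (i : ℕ)), fun i => ?_, fun i j => ?_⟩
      · simp [rhoD, hz]
      · exact ⟨z i + (i : ℕ) - (z j + (j : ℕ)), by ring⟩
    · choose z hz using h3
      refine ⟨fun i => 2 * (z i + (i : ℕ)) + 1, fun i => ?_, fun i j => ?_⟩
      · simp only [rhoD, hz, Pi.add_apply]; push_cast; ring
      · exact ⟨z i + (i : ℕ) - (z j + (j : ℕ)), by ring⟩
  obtain ⟨b, hb, hp⟩ := hex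
  refine ⟨b, hb, ?_, hp⟩
  have hb' : ∀ i, (b i : ℚ) = 2 * (lam i + (i : ℕ)) := fun i => (hb i).symm
  have hnn : ∀ i : Fin (k + 1), i ≠ 0 → 0 ≤ lam i := fun i hi =>
    (abs_nonneg _).trans (h2 (Nat.succ_pos k) i (Nat.pos_of_ne_zero fun h => hi (Fin.ext h)))
  have hbn : ∀ i : Fin (k + 1), i ≠ 0 → 0 ≤ b i := by
    intro i hi
    have h4 := hnn i hi
    have : (0 : ℚ) ≤ b i := by rw [hb']; positivity
    exact_mod_cast this
  refine ⟨?_, hbn⟩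
  intro i j hij
  have hj : j ≠ 0 := by rintro rfl; exact absurd hij (Fin.not_lt_zero i)
  have hijn : ((i : ℕ) : ℚ) < ((j : ℕ) : ℚ) := by exact_mod_cast hij
  have hj0 : 0 < (j : ℕ) := Nat.pos_of_ne_zero fun h => hj (Fin.ext h)
  show |b i| < |b j|
  rw [abs_of_nonneg (hbn j hj)]
  have : ((|b i| : ℤ) : ℚ) < (b j : ℚ) := by
    push_cast
    rw [hb', hb']
    by_cases hi : i = 0
    · subst hi
      have h4 : |lam 0| ≤ lam j := h2 (Nat.succ_pos k) j hj0
      simp only [Fin.val_zero, Nat.cast_zero] at hijn ⊢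
      rw [abs_mul, add_zero, abs_two]
      linarith
    · have h4 := hnn i hi
      have h5 := h1 i j hij.le (Nat.pos_of_ne_zero fun h => hi (Fin.ext h))
      rw [abs_of_nonneg (by positivity)]
      linarith
  exact_mod_cast this

theorem cham_mono {k : ℕ} (μ : Fin (k + 1) → ℤ) (hc : Cham μ) (hp : ∀ i j, Even (μ i - μ j)) :
    Monotone (fun i : Fin (k + 1) => |μ i| - 2 * ((i : ℕ) : ℤ)) := by
  rw [Fin.monotone_iff_le_succ]
  intro i
  have h1 : |μ i.castSucc| < |μ i.succ| := hc.1 Fin.castSucc_lt_succ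
  obtain ⟨z, hz⟩ := hp i.castSucc i.succ
  simp only [Fin.val_castSucc, Fin.val_succ, abs_eq_max_neg] at h1 ⊢
  omega

theorem int_dom {k : ℕ} (γ : Fin (k + 1) → ℚ) (hγ : DominantD γ) (g : Fin (k + 1) → ℤ)
    (hg : ∀ i, 2 * (γ + rhoD (k + 1)) i = g i) (μ : Fin (k + 1) → ℤ) (hc : Cham μ)
    (hp : ∀ i j, Even (μ i - g j)) :
    ∃ lam : Fin (k + 1) → ℚ, DominantD lam ∧ (∀ i, ∃ z : ℤ, lam i - γ i = z) ∧
      ∀ i, 2 * (lam + rhoD (k + 1)) i = μ i := by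
  have hpp : ∀ i j, Even (μ i - μ j) := fun i j => by
    have h1 := hp i i
    have h2 := hp j i
    have := h1.sub h2
    rwa [sub_sub_sub_cancel_right] at this
  have hm := cham_mono μ hc hpp
  have hg' : ∀ i, (g i : ℚ) = 2 * (γ i + (i : ℕ)) := fun i => (hg i).symm
  have hz : ∀ i, ∃ z : ℤ, ((μ i : ℚ) / 2 - (i : ℕ)) - γ i = z := by
    intro i
    obtain ⟨z, hz⟩ := hp i i
    refine ⟨z, ?_⟩
    have : (μ i : ℚ) - g i = z + z := by exact_mod_cast hz
    rw [hg'] at this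
    linarith
  have hab : ∀ i j : Fin (k + 1), i ≤ j → j ≠ 0 →
      |(μ i : ℚ)| - 2 * ((i : ℕ) : ℚ) ≤ (μ j : ℚ) - 2 * ((j : ℕ) : ℚ) := by
    intro i j hij hj
    have := hm hij
    simp only [abs_of_nonneg (hc.2 j hj)] at this
    exact_mod_cast this
  refine ⟨fun i => (μ i : ℚ) / 2 - (i : ℕ), ⟨?_, ?_, ?_⟩, hz, ?_⟩
  · intro i j hij hi
    have hi' : i ≠ 0 := by rintro rfl; simp at hi
    have hj' : j ≠ 0 := by rintro rfl; exact hi' (Fin.le_zero_iff.mp hij)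
    have := hab i j hij hj'
    have h2 := le_abs_self (μ i : ℚ)
    show (μ i : ℚ) / 2 - (i : ℕ) ≤ (μ j : ℚ) / 2 - (j : ℕ)
    linarith
  · intro h j hj
    have hj' : j ≠ 0 := by rintro rfl; simp at hj
    have := hab 0 j (Fin.zero_le j) hj'
    show |(μ 0 : ℚ) / 2 - ((0 : ℕ) : ℚ)| ≤ (μ j : ℚ) / 2 - (j : ℕ)
    simp only [Fin.val_zero, Nat.cast_zero, mul_zero, sub_zero] at this ⊢
    rw [abs_div, abs_two]
    linarith
  · choose z hz using hz
    rcases hγ.2.2 with h | h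
    · left
      intro i
      obtain ⟨w, hw⟩ := h i
      refine ⟨z i + w, ?_⟩
      have := hz i
      push_cast
      linarith
    · right
      intro i
      obtain ⟨w, hw⟩ := h i
      refine ⟨z i + w, ?_⟩
      have := hz i
      push_cast
      linarith
  · intro i
    simp only [rhoD, Pi.add_apply]
    ring

theorem int_case0 (A0 A1 B0 B1 : ℤ) (s1 s2 t1 t2 : ℕ) (hm : min s1 s2 = 0)
    (h0 : 2 * ((s2 : ℤ) - s1) = A0 - B0) (h1 : 2 * ((t2 : ℤ) - t1) = A1 - B1)
    (hp : Even (A1 - A0)) :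
    (2 * min t1 t2 < (min A1 B1 - max |A0| |B0|).toNat) ↔
    (((s1 = 0 → A0 ≤ A1 - 2 - 2 * t2) ∧ (0 < s1 → - A0 ≤ A1 - 2 - 2 * t2)) ∧
      (s1 = 0 → 0 ≤ B0 → A0 - 2 * s2 ≤ A1 - 2 - 2 * t2) ∧
      (s2 = 0 → 0 ≤ B0 → A0 + 2 * s1 ≤ A1 - 2 - 2 * t2) ∧
      (s2 = 0 → B0 < 0 → -A0 - 2 * s1 ≤ A1 - 2 - 2 * t2) ∧
      (s1 = 0 → B0 < 0 → -A0 + 2 * s2 ≤ A1 - 2 - 2 * t2)) := by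
  obtain ⟨z, hz⟩ := hp
  simp only [abs_eq_max_neg]
  rcases Nat.eq_zero_or_pos s1 with h | h
  · subst h
    constructor
    · intro h
      refine ⟨⟨fun _ => ?_, fun _ => ?_⟩, fun _ _ => ?_, fun _ _ => ?_, fun _ _ => ?_, fun _ _ => ?_⟩ <;> omega
    · rintro ⟨⟨h1, h2⟩, h3, h4, h5, h6⟩
      simp only [forall_const] at h1 h3 h6
      rcases lt_or_ge B0 0 with hB | hB
      · have := h6 hB; omega
      · have := h3 hB; omega
  · have : s2 = 0 := by omega
    subst this
    constructor
    · intro h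
      refine ⟨⟨fun _ => ?_, fun _ => ?_⟩, fun _ _ => ?_, fun _ _ => ?_, fun _ _ => ?_, fun _ _ => ?_⟩ <;> omega
    · rintro ⟨⟨h1, h2⟩, h3, h4, h5, h6⟩
      have h2 := h2 h
      simp only [forall_const] at h4 h5
      rcases lt_or_ge B0 0 with hB | hB
      · have := h5 hB; omega
      · have := h4 hB; omega

theorem int_case1 (A0 A1 B0 B1 : ℤ) (s1 s2 t1 t2 : ℕ) (hA : 0 ≤ A0) (hB : 0 ≤ B0)
    (h0 : 2 * ((s2 : ℤ) - s1) = A0 - B0) (h1 : 2 * ((t2 : ℤ) - t1) = A1 - B1)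
    (hp : Even (A1 - A0)) :
    (2 * min t1 t2 < (min A1 B1 - max |A0| |B0|).toNat) ↔
    (A0 ≤ A1 - 2 - 2 * t2 ∧ A0 + 2 * s1 - 2 * s2 ≤ A1 - 2 - 2 * t2) := by
  obtain ⟨z, hz⟩ := hp
  rw [abs_of_nonneg hA, abs_of_nonneg hB]
  omega

theorem le_iff_two (x y : ℚ) (m n : ℤ) (hx : 2 * x = m) (hy : 2 * y = n) : x ≤ y ↔ m ≤ n := by
  rw [← Int.cast_le (R := ℚ), ← hx, ← hy]
  constructor <;> intro h <;> linarith

def Pbdd {k : ℕ} (a b : Fin (k + 2) → ℤ) : Fin (k + 2) → ℕ → ℕ → Prop :=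
  Fin.cons (fun k k' => ((k' : ℤ) - k = (a 0 - b 0) / 2 ∧ min k k' = 0))
    (fun i k k' => ((k' : ℤ) - k = (a i.succ - b i.succ) / 2 ∧ 2 * min k k' <
      (min (a i.succ) (b i.succ) - max |a i.castSucc| |b i.castSucc|).toNat))

theorem core_iff {k : ℕ} (γ lam : Fin (k + 2) → ℚ) (a b : Fin (k + 2) → ℤ)
    (ha : ∀ i, 2 * (lam + rhoD (k + 2)) i = a i) (hb : ∀ i, 2 * (γ + rhoD (k + 2)) i = b i)
    (hac : Cham a) (hbc : Cham b) (hp : ∀ i j, Even (a i - b j)) (r : ℕ) :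
    dPieri γ lam r = Nat.card {t : (Fin (k + 2) → ℕ) × (Fin (k + 2) → ℕ) //
      (∀ i, Pbdd a b i (t.1 i) (t.2 i)) ∧ ∑ i, (t.1 i + t.2 i) = r} := by
  have ha' : ∀ i, lam i = (a i : ℚ) / 2 - (i : ℕ) := fun i => by
    have := ha i
    simp only [rhoD, Pi.add_apply] at this
    linarith
  have hb' : ∀ i, γ i = (b i : ℚ) / 2 - (i : ℕ) := fun i => by
    have := hb i
    simp only [rhoD, Pi.add_apply] at this
    linarith
  have hpa : ∀ i j, Even (a i - a j) := fun i j => by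
    have := (hp i i).sub (hp j i)
    rwa [sub_sub_sub_cancel_right] at this
  unfold dPieri
  refine Nat.card_congr (Equiv.subtypeEquivRight ?_)
  rintro ⟨t1, t2⟩
  simp only
  have hv : ∀ i, ((t2 i : ℚ) - (t1 i : ℚ) = lam i - γ i) ↔
      (t2 i : ℤ) - t1 i = (a i - b i) / 2 := by
    intro i
    rw [ha', hb']
    obtain ⟨z, hz⟩ := hp i i
    have hz' : (a i : ℚ) - b i = z + z := by exact_mod_cast hz
    rw [show (a i - b i) / 2 = z by omega, ← Int.cast_inj (α := ℚ)]
    push_cast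
    constructor <;> intro h <;> linarith
  have hdd : (∀ i, (t2 i : ℤ) - t1 i = (a i - b i) / 2) →
      ∀ i, 2 * ((t2 i : ℤ) - t1 i) = a i - b i := by
    intro h i
    have h1 := h i
    obtain ⟨z, hz⟩ := hp i i
    omega
  have hγ0 : 0 ≤ γ 0 ↔ 0 ≤ b 0 := le_iff_two _ _ _ _ (by simp) (by rw [hb']; simp; ring)
  have hγ1 : γ 0 < 0 ↔ b 0 < 0 := by rw [← not_le, ← not_le, hγ0]
  have e0 : ((0 : Fin (k + 2)) : ℕ) = 0 := rfl
  have e1 : ((1 : Fin (k + 2)) : ℕ) = 1 := rfl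
  have r1 : lam 0 ≤ lam 1 - (t2 1 : ℚ) ↔ a 0 ≤ a 1 - 2 - 2 * t2 1 :=
    le_iff_two _ _ _ _ (by rw [ha', e0]; push_cast; ring) (by rw [ha', e1]; push_cast; ring)
  have r2 : -lam 0 ≤ lam 1 - (t2 1 : ℚ) ↔ -a 0 ≤ a 1 - 2 - 2 * t2 1 :=
    le_iff_two _ _ _ _ (by rw [ha', e0]; push_cast; ring) (by rw [ha', e1]; push_cast; ring)
  have r3 : lam 0 - t2 0 ≤ lam 1 - (t2 1 : ℚ) ↔ a 0 - 2 * t2 0 ≤ a 1 - 2 - 2 * t2 1 :=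
    le_iff_two _ _ _ _ (by rw [ha', e0]; push_cast; ring) (by rw [ha', e1]; push_cast; ring)
  have r4 : lam 0 + t1 0 ≤ lam 1 - (t2 1 : ℚ) ↔ a 0 + 2 * t1 0 ≤ a 1 - 2 - 2 * t2 1 :=
    le_iff_two _ _ _ _ (by rw [ha', e0]; push_cast; ring) (by rw [ha', e1]; push_cast; ring)
  have r5 : -lam 0 - t1 0 ≤ lam 1 - (t2 1 : ℚ) ↔ -a 0 - 2 * t1 0 ≤ a 1 - 2 - 2 * t2 1 :=
    le_iff_two _ _ _ _ (by rw [ha', e0]; push_cast; ring) (by rw [ha', e1]; push_cast; ring)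
  have r6 : -lam 0 + t2 0 ≤ lam 1 - (t2 1 : ℚ) ↔ -a 0 + 2 * t2 0 ≤ a 1 - 2 - 2 * t2 1 :=
    le_iff_two _ _ _ _ (by rw [ha', e0]; push_cast; ring) (by rw [ha', e1]; push_cast; ring)
  have s1 : ∀ j : Fin k, lam j.succ.castSucc ≤ lam j.succ.succ - (t2 j.succ.succ : ℚ) ↔
      a j.succ.castSucc ≤ a j.succ.succ - 2 - 2 * t2 j.succ.succ := fun j => by
    rw [← sub_le_sub_iff_right (2 * ((j : ℤ) + 1))]
    exact le_iff_two _ _ _ _ (by rw [ha']; push_cast [Fin.val_castSucc, Fin.val_succ]; ring)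
      (by rw [ha']; push_cast [Fin.val_castSucc, Fin.val_succ]; ring)
  have s2 : ∀ j : Fin k, lam j.succ.castSucc + t1 j.succ.castSucc - t2 j.succ.castSucc
        ≤ lam j.succ.succ - (t2 j.succ.succ : ℚ) ↔
      a j.succ.castSucc + 2 * t1 j.succ.castSucc - 2 * t2 j.succ.castSucc
        ≤ a j.succ.succ - 2 - 2 * t2 j.succ.succ := fun j => by
    rw [← sub_le_sub_iff_right (2 * ((j : ℤ) + 1))]
    exact le_iff_two _ _ _ _ (by rw [ha']; push_cast [Fin.val_castSucc, Fin.val_succ]; ring)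
      (by rw [ha']; push_cast [Fin.val_castSucc, Fin.val_succ]; ring)
  have q1 : ∀ (_ : min (t1 0) (t2 0) = 0) (_ : ∀ i, 2 * ((t2 i : ℤ) - t1 i) = a i - b i), _ :=
    fun hm hd => int_case0 (a 0) (a 1) (b 0) (b 1) _ _ _ _ hm (hd 0) (hd 1) (hpa 1 0)
  have q2 : ∀ (_ : ∀ i, 2 * ((t2 i : ℤ) - t1 i) = a i - b i) (j : Fin k), _ :=
    fun hd j => int_case1 (a j.succ.castSucc) (a j.succ.succ) (b j.succ.castSucc) (b j.succ.succ)
      _ _ _ _ (hac.2 _ (by simp [Fin.ext_iff])) (hbc.2 _ (by simp [Fin.ext_iff])) (hd _) (hd _) (hpa _ _)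
  rw [← r1, ← r2, ← r3, ← r4, ← r5, ← r6, ← hγ0, ← hγ1] at q1
  constructor
  · rintro ⟨h1, h2, h3, h4, h5, h6, h7⟩
    have h1 : min (t1 0) (t2 0) = 0 := h1 (by omega)
    simp only [hv] at h3
    have hd := hdd h3
    refine ⟨?_, h2⟩
    rw [Fin.forall_fin_succ]
    refine ⟨⟨h3 0, h1⟩, fun i => ⟨h3 i.succ, ?_⟩⟩
    refine Fin.cases ?_ (fun j => ?_) i
    · exact (q1 h1 hd).2 ⟨h4 (by omega), h7 (by omega)⟩
    · refine (q2 hd j).2 ⟨(s1 j).1 ?_, (s2 j).1 ?_⟩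
      · exact h5 j.succ.castSucc (by simp) (by simp)
      · exact h6 j.succ.castSucc (by simp) (by simp)
  · rintro ⟨h1, h2⟩
    rw [Fin.forall_fin_succ] at h1
    obtain ⟨⟨h3, h4⟩, h5⟩ := h1
    have h3' : ∀ i, (t2 i : ℤ) - t1 i = (a i - b i) / 2 := by
      rw [Fin.forall_fin_succ]
      exact ⟨h3, fun i => (h5 i).1⟩
    have hd := hdd h3'
    have h6 := (q1 h4 hd).1 (h5 0).2
    have h7 : ∀ i : Fin (k + 2), 1 ≤ (i : ℕ) → ∀ h : (i : ℕ) + 1 < k + 2,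
        ∃ j : Fin k, i = j.succ.castSucc ∧ (⟨(i : ℕ) + 1, h⟩ : Fin (k + 2)) = j.succ.succ := by
      intro i hi h
      refine ⟨⟨(i : ℕ) - 1, by omega⟩, ?_, ?_⟩ <;> ext <;> simp <;> omega
    refine ⟨fun _ => h4, h2, fun i => (hv i).2 (h3' i), fun _ => h6.1, ?_, ?_, fun _ => h6.2⟩
    · intro i hi h
      obtain ⟨j, hj1, hj2⟩ := h7 i hi h
      rw [hj2, hj1]
      exact (s1 j).2 ((q2 hd j).1 (h5 j.succ).2).1
    · intro i hi h
      obtain ⟨j, hj1, hj2⟩ := h7 i hi h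
      rw [hj2, hj1]
      exact (s2 j).2 ((q2 hd j).1 (h5 j.succ).2).2

theorem d_gf {k : ℕ} (γ lam : Fin (k + 2) → ℚ) (a b : Fin (k + 2) → ℤ)
    (ha : ∀ i, 2 * (lam + rhoD (k + 2)) i = a i) (hb : ∀ i, 2 * (γ + rhoD (k + 2)) i = b i)
    (hac : Cham a) (hbc : Cham b) (hp : ∀ i j, Even (a i - b j)) :
    (1 - PowerSeries.X ^ 2) ^ (k + 1) * PowerSeries.mk (fun r => (dPieri γ lam r : ℤ))
      = PowerSeries.X ^ ((a 0 - b 0).natAbs / 2) *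
      ∏ i : Fin (k + 1), (PowerSeries.X ^ ((a i.succ - b i.succ).natAbs / 2) *
      (1 - PowerSeries.X ^ (min (a i.succ) (b i.succ) - max |a i.castSucc| |b i.castSucc|).toNat)) := by
  have : PowerSeries.mk (fun r => (dPieri γ lam r : ℤ)) = ∏ i, phi (Pbdd a b i) := by
    ext r
    rw [PowerSeries.coeff_mk, core_iff γ lam a b ha hb hac hbc hp, count_gf]
  have hn : ∀ i, (a i - b i).natAbs / 2 = ((a i - b i) / 2).natAbs := fun i => by
    obtain ⟨z, hz⟩ := hp i i
    omega
  rw [this, Fin.prod_univ_succ]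
  simp only [Pbdd, Fin.cons_zero, Fin.cons_succ, hn]
  rw [phi_zero, mul_left_comm]
  congr 1
  rw [show (1 - PowerSeries.X ^ 2 : PowerSeries ℤ) ^ (k + 1) =
      ∏ _i : Fin (k + 1), (1 - PowerSeries.X ^ 2) by simp, ← Finset.prod_mul_distrib]
  refine Finset.prod_congr rfl fun i _ => phi_bdd _ _ ?_
  obtain ⟨z1, h1⟩ := hp i.succ i.succ
  obtain ⟨z2, h2⟩ := hp i.castSucc i.succ
  obtain ⟨z3, h3⟩ := hp i.succ i.castSucc
  rw [Nat.even_iff]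
  simp only [abs_eq_max_neg]
  omega

theorem d_fin {n : ℕ} (γ : Fin n → ℚ) (r : ℕ) : {lam : Fin n → ℚ | dPieri γ lam r ≠ 0}.Finite := by
  refine (Set.finite_range (fun t : (Fin n → Fin (r + 1)) × (Fin n → Fin (r + 1)) =>
    fun i => γ i + ((t.2 i : ℕ) : ℚ) - ((t.1 i : ℕ) : ℚ))).subset ?_
  intro lam h
  have h' : dPieri γ lam r ≠ 0 := h
  unfold dPieri at h'
  obtain ⟨⟨t, _, h2, h3, _⟩⟩ := (Nat.card_ne_zero.mp h').1
  have hle : ∀ i, t.1 i + t.2 i ≤ r := fun i => by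
    rw [← h2]
    exact Finset.single_le_sum (f := fun i => t.1 i + t.2 i) (fun _ _ => Nat.zero_le _)
      (Finset.mem_univ i)
  refine ⟨(fun i => ⟨t.1 i, by have := hle i; omega⟩, fun i => ⟨t.2 i, by have := hle i; omega⟩), ?_⟩
  funext i
  have := h3 i
  simp only
  linarith

theorem pieri_main (k : ℕ) (γ : Fin (k + 2) → ℚ) (hγ : DominantD γ) (r : ℕ) :
    altD (γ + rhoD (k + 2)) * Hr (k + 1) r =
    ∑ᶠ lam ∈ {lam : Fin (k + 2) → ℚ | DominantD lam ∧ ∀ i, ∃ z : ℤ, lam i - γ i = z},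
      (dPieri γ lam r : ℤ) • altD (lam + rhoD (k + 2)) := by
  classical
  obtain ⟨g, hg, hgc, hgp⟩ := dom_int γ hγ
  set T := {lam : Fin (k + 2) → ℚ | DominantD lam ∧ ∀ i, ∃ z : ℤ, lam i - γ i = z} with hT
  have hfin : (T ∩ {lam | dPieri γ lam r ≠ 0}).Finite := (d_fin γ r).inter_of_right _
  set S := hfin.toFinset with hS
  have hmem : ∀ lam, lam ∈ S ↔ lam ∈ T ∧ dPieri γ lam r ≠ 0 := fun lam => by
    rw [hS, Set.Finite.mem_toFinset]; rfl
  have hsum : ∑ᶠ lam ∈ T, (dPieri γ lam r : ℤ) • altD (lam + rhoD (k + 2)) =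
      ∑ lam ∈ S, (dPieri γ lam r : ℤ) • altD (lam + rhoD (k + 2)) := by
    apply finsum_mem_eq_sum_of_inter_support_eq
    ext lam
    simp only [Set.mem_inter_iff, Function.mem_support, Finset.mem_coe, hmem]
    constructor
    · rintro ⟨h1, h2⟩
      refine ⟨⟨h1, ?_⟩, h2⟩
      intro h
      rw [h] at h2
      simp at h2
    · rintro ⟨⟨h1, _⟩, h2⟩
      exact ⟨h1, h2⟩
  rw [hsum]
  have hcode : ∀ lam ∈ T, ∃ b : Fin (k + 2) → ℤ, (∀ i, 2 * (lam + rhoD (k + 2)) i = b i) ∧ Cham b ∧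
      (∀ i j, Even (b i - b j)) ∧ ∀ i j, Even (b i - g j) := by
    rintro lam ⟨h1, h2⟩
    obtain ⟨b, hb, hbc, hbp⟩ := dom_int lam h1
    refine ⟨b, hb, hbc, hbp, fun i j => ?_⟩
    obtain ⟨z, hz⟩ := h2 j
    have h3 : b j - g j = z + z := by
      have h4 := hb j
      have h5 := hg j
      simp only [Pi.add_apply] at h4 h5
      have : (b j : ℚ) - g j = z + z := by rw [← h4, ← h5]; linarith
      exact_mod_cast this
    have := (hbp i j).add ⟨z, h3⟩
    rwa [sub_add_sub_cancel] at this
  have hG : AntiInv (fun μ => ∑ lam ∈ S, (dPieri γ lam r : ℤ) * (altD (lam + rhoD (k + 2))).coeff μ) := by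
    apply AntiInv.sum S _ (fun lam μ => (altD (lam + rhoD (k + 2))).coeff μ)
    intro lam hl
    obtain ⟨b, hb, _⟩ := hcode lam ((hmem lam).1 hl).1
    exact alt_anti _ b hb
  have hF := LHS_anti (γ + rhoD (k + 2)) g hg r
  have key := AntiInv.ext hF hG ?_
  · ext μ
    have h1 := key μ
    rw [h1, AddMonoidAlgebra.coeff_sum, Finsupp.finsetSum_apply]
    rfl
  intro μ hμ
  have hgf := LHS_gf (γ + rhoD (k + 2)) g hg μ
  by_cases hp : ∀ i j, Even (μ i - g j)
  · obtain ⟨l0, hl1, hl2, hl3⟩ := int_dom γ hγ g hg μ hμ hp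
    have hR : ∑ lam ∈ S, (dPieri γ lam r : ℤ) * (altD (lam + rhoD (k + 2))).coeff μ
        = dPieri γ l0 r := by
      have hval : ∀ lam ∈ S, (dPieri γ lam r : ℤ) * (altD (lam + rhoD (k + 2))).coeff μ =
          if lam = l0 then (dPieri γ l0 r : ℤ) else 0 := by
        intro lam hl
        obtain ⟨b, hb, hbc, hbp, _⟩ := hcode lam ((hmem lam).1 hl).1
        rw [alt_cham _ b hb hbc hbp μ hμ]
        by_cases he : lam = l0
        · subst he
          have : μ = b := by
            funext i
            have h1 := hb i
            rw [hl3 i] at h1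
            exact_mod_cast h1
          rw [if_pos this, if_pos rfl, mul_one]
        · rw [if_neg he, if_neg, mul_zero]
          rintro rfl
          apply he
          funext i
          have h1 := hb i
          rw [← hl3 i] at h1
          simp only [Pi.add_apply] at h1
          linarith
      rw [Finset.sum_congr rfl hval, Finset.sum_ite_eq' S l0]
      split_ifs with h
      · rfl
      · by_contra hne
        apply h
        rw [hmem]
        exact ⟨⟨hl1, hl2⟩, fun h0 => hne (by rw [h0]; simp)⟩
    rw [hR]
    rw [DD_sum _ μ g hμ hgc hp, ← d_gf γ l0 μ g hl3 hg hμ hgc hp, ← mul_assoc, ← mul_assoc] at hgf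
    have h3 := congrArg (PowerSeries.coeff r) (mul_left_cancel₀ (one_sub_ne (k + 1)) hgf)
    rwa [PowerSeries.coeff_mk, PowerSeries.coeff_mk] at h3
  · push Not at hp
    obtain ⟨i, j, hij⟩ := hp
    have hz : ∀ j', ¬ Even (μ i - g j') := fun j' => by have := hgp j j'; grind
    rw [DD_zero _ _ _ _ i hz, DD_zero _ _ _ _ i hz, add_zero, ← mul_assoc] at hgf
    have h3 := (mul_eq_zero.mp hgf).resolve_left (one_sub_ne (k + 1))
    have h4 := congrArg (PowerSeries.coeff r) h3
    rw [PowerSeries.coeff_mk, map_zero] at h4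
    rw [h4]
    symm
    apply Finset.sum_eq_zero
    intro lam hl
    obtain ⟨b, hb, hbc, hbp, hbg⟩ := hcode lam ((hmem lam).1 hl).1
    rw [alt_cham _ b hb hbc hbp μ hμ, if_neg, mul_zero]
    rintro rfl
    exact hij (hbg i j)

/-- Pieri rule of type `D_n` at the level of Weyl alternants:
`a_{γ+ρ} · char V(rΛ_{n-1}) = ∑_λ d^λ_{γ,r} a_{λ+ρ}`. -/
theorem pieri_D (n : ℕ) (hn : 2 ≤ n) (γ : Fin n → ℚ) (hγ : DominantD γ) (r : ℕ) :
    altD (γ + rhoD n) *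
      (∑ t : (Fin n → Fin (r + 1)) × (Fin n → Fin (r + 1)),
        if min (t.1 ⟨0, by omega⟩ : ℕ) (t.2 ⟨0, by omega⟩ : ℕ) = 0 ∧
            ∑ i, ((t.1 i : ℕ) + (t.2 i : ℕ)) = r then
          xpow (fun i => ((t.2 i : ℕ) : ℚ) - ((t.1 i : ℕ) : ℚ))
        else 0) =
    ∑ᶠ lam ∈ {lam : Fin n → ℚ | DominantD lam ∧ ∀ i, ∃ z : ℤ, lam i - γ i = z},
      (dPieri γ lam r : ℤ) • altD (lam + rhoD n) := by

  obtain ⟨k, rfl⟩ : ∃ k, n = k + 2 := ⟨n - 2, by omega⟩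
  exact pieri_main k γ hγ r
end
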